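/- With the apparatus fixed, suppose in addition that J_{s+r,k}(X) > X^{λ−δ}. Then there exist a prime number p with M < p ≤ 2M, an integer h ∈ {0,1,2,3}, and a constant C depending at most on s, k, r, t, N, such that J_{s+r,k}(X) ≤ C·M^{2s+2sh/3}·K_{0,1+h}(X), where K_{0,1+h}(X) is formed with respect to this prime p. -/

import Mathlib

open Filter MeasureTheory Finset

attribute [local instance] Classical.propDecidable

noncomputable section

/-- Number of integral solutions of the Vinogradov system of degree k
in 2s variables from [1,X]. -/
def Jcount (s k : ℕ) (X : ℝ) : ℕ :=
  Set.ncard {xy : (Fin s → ℤ) × (Fin s → ℤ) |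
    (∀ i, 1 ≤ xy.1 i ∧ (xy.1 i : ℝ) ≤ X) ∧
    (∀ i, 1 ≤ xy.2 i ∧ (xy.2 i : ℝ) ≤ X) ∧
    ∀ j ∈ Finset.Icc 1 k, ∑ i, ((xy.1 i) ^ j - (xy.2 i) ^ j) = 0}

/-- e(z) = exp(2πiz). -/
def ec (z : ℝ) : ℂ := Complex.exp (2 * Real.pi * Complex.I * z)

/-- The unit box [0,1)^k. -/
def box (k : ℕ) : Set (Fin k → ℝ) := Set.univ.pi fun _ => Set.Ico (0:ℝ) 1

/-- The exponential sum f_c(α;ξ), over 1 ≤ x ≤ X with x ≡ ξ (mod p^c). -/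
def fexp (k p : ℕ) (X : ℝ) (c : ℕ) (ξ : ℤ) (α : Fin k → ℝ) : ℂ :=
  ∑ x ∈ (Finset.Icc (1:ℤ) ⌊X⌋).filter (fun x => Int.ModEq ((p:ℤ)^c) x ξ),
    ec (∑ j : Fin k, α j * (x:ℝ)^((j:ℕ)+1))

/-- The set Ξ_c^r(ξ): r-tuples in [1,p^{c+1}], congruent to ξ mod p^c,
pairwise distinct mod p^{c+1}. -/
def XiSet (p r c : ℕ) (ξ : ℤ) : Set (Fin r → ℤ) :=
  {v | (∀ i, 1 ≤ v i ∧ v i ≤ (p:ℤ)^(c+1)) ∧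
       (∀ i, Int.ModEq ((p:ℤ)^c) (v i) ξ) ∧
       Function.Injective fun i => ((v i : ZMod (p^(c+1))))}

/-- The conditioned exponential sum F_c(α;ξ). -/
def Fexp (k p r : ℕ) (X : ℝ) (c : ℕ) (ξ : ℤ) (α : Fin k → ℝ) : ℂ :=
  ∑ᶠ v ∈ XiSet p r c ξ, ∏ i, fexp k p X (c+1) (v i) α

/-- The mean value I_{a,b}(X;ξ,η). -/
def Iab (k p r s : ℕ) (X : ℝ) (a b : ℕ) (ξ η : ℤ) : ℝ :=
  ∫ α in box k, ‖Fexp k p r X a ξ α‖^2 * ‖fexp k p X b η α‖^(2*s)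

/-- The mean value K_{a,b}(X;ξ,η). -/
def Kab (k p r t : ℕ) (X : ℝ) (a b : ℕ) (ξ η : ℤ) : ℝ :=
  ∫ α in box k, ‖Fexp k p r X a ξ α‖^2 * ‖Fexp k p r X b η α‖^(2*t)

/-- I_{a,b}(X): the maximum of I_{a,b}(X;ξ,η) over admissible ξ, η. -/
def Imax (k p r s : ℕ) (X : ℝ) (a b : ℕ) : ℝ :=
  sSup {v : ℝ | ∃ ξ η : ℤ, 1 ≤ ξ ∧ ξ ≤ (p:ℤ)^a ∧ 1 ≤ η ∧ η ≤ (p:ℤ)^b ∧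
    ¬ Int.ModEq (p:ℤ) η ξ ∧ v = Iab k p r s X a b ξ η}

/-- The set Ξ(η) of members of Ξ_0^r(0) avoiding the class of η mod p. -/
def XiTilde (p r : ℕ) (η : ℤ) : Set (Fin r → ℤ) :=
  {v | v ∈ XiSet p r 0 0 ∧ ∀ i, ¬ Int.ModEq (p:ℤ) (v i) η}

/-- The pre-conditioned sum F(α;η). -/
def Ftilde (k p r : ℕ) (X : ℝ) (η : ℤ) (α : Fin k → ℝ) : ℂ :=
  ∑ᶠ v ∈ XiTilde p r η, ∏ i, fexp k p X 1 (v i) α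

/-- The mean value K̃_c(X;η). -/
def Ktilde (k p r t : ℕ) (X : ℝ) (c : ℕ) (η : ℤ) : ℝ :=
  ∫ α in box k, ‖Ftilde k p r X η α‖^2 * ‖Fexp k p r X c η α‖^(2*t)

/-- K_{a,b}(X): for a ≥ 1 the maximum of K_{a,b}(X;ξ,η) over admissible ξ, η;
for a = 0 the pre-congruencing quantity K_{0,b}(X) = max_η K̃_b(X;η). -/
def Kmax (k p r t : ℕ) (X : ℝ) (a b : ℕ) : ℝ :=
  if a = 0 then sSup {v : ℝ | ∃ η : ℤ, 1 ≤ η ∧ η ≤ (p:ℤ)^b ∧ v = Ktilde k p r t X b η}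
  else sSup {v : ℝ | ∃ ξ η : ℤ, 1 ≤ ξ ∧ ξ ≤ (p:ℤ)^a ∧ 1 ≤ η ∧ η ≤ (p:ℤ)^b ∧
    ¬ Int.ModEq (p:ℤ) η ξ ∧ v = Kab k p r t X a b ξ η}

/-- λ = limsup_{Y→∞} log J_{sr,k}(Y)/log Y. -/
def lamExp (k sr : ℕ) : ℝ :=
  Filter.limsup (fun Y : ℝ => Real.log ((Jcount sr k Y : ℝ)) / Real.log Y) Filter.atTop

/-- θ = (16t)^{-N-1}. -/
def thetaC (t N : ℕ) : ℝ := (16*(t:ℝ)) ^ (-((N:ℝ)+1))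

/-- δ = θ/(1000 N t^N). -/
def deltaC (t N : ℕ) : ℝ := thetaC t N / (1000 * (N:ℝ) * (t:ℝ)^N)

/-- M = X^θ. -/
def Mval (t N : ℕ) (X : ℝ) : ℝ := X ^ thetaC t N

/-- κ = r(t+1) - (1/2)(t+r-k)(t+r-k-1+(2r-2)/(t-1)). -/
def kappa (k r t : ℕ) : ℝ :=
  (r : ℝ) * ((t : ℝ) + 1) -
    (1/2) * ((t : ℝ) + r - k) * ((t : ℝ) + r - k - 1 + (2*(r:ℝ) - 2)/((t:ℝ) - 1))

/-- Λ = λ - 2(s+r) + κ, with s = rt. -/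
def LamC (k r t : ℕ) : ℝ := lamExp k (r*(t+1)) - 2*((r*(t+1) : ℕ) : ℝ) + kappa k r t

/-- The normalised mean value ⟦K_{a,b}(X)⟧ = K_{a,b}(X) (X/M^b)^{-2s} (X/M^a)^{κ-2r}. -/
def normK (k p r t N : ℕ) (X : ℝ) (a b : ℕ) : ℝ :=
  Kmax k p r t X a b * (X / (Mval t N X)^b) ^ (-(2*((r*t : ℕ):ℝ))) *
    (X / (Mval t N X)^a) ^ (kappa k r t - 2*(r:ℝ))

/-- μ = (1/2)(t+r-k)(t+r-k-1). -/
def muC (k r t : ℕ) : ℝ := (1/2) * ((t:ℝ)+r-k) * ((t:ℝ)+r-k-1)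

/-- ν = (1/2)(t+r-k)(k+r-t-1). -/
def nuC (k r t : ℕ) : ℝ := (1/2) * ((t:ℝ)+r-k) * ((k:ℝ)+r-t-1)

/-!
Here `s = r t`. Solutions of the Vinogradov system with a repeated variable contribute
at most half of `J_{s+r,k}(X)`, up to a constant. The differences of the variables of any other
solution have boundedly many prime divisors exceeding `M`, so that some prime `p ∈ (M, 2M]` keeps
the variables on each side distinct modulo `p` for at least half of these solutions. Sorting the
last `s` variables on each side into classes modulo `p` bounds the number of them by
`s p^{2s} max_η Ĩ_1(η)`, where `Ĩ_c(η)` is the mean value of `|F(α;η)² f_c(α;η)^{2s}|`.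

If no class modulo `p^{c+1}` contains more than `t` of the `s` variables in the class of `η` modulo
`p^c`, these variables split into `t` blocks of `r` which are distinct modulo `p^{c+1}`, so they
are counted by `K̃_c(η)`. Otherwise `t + 1 ≥ 3` of them share a class modulo `p^{c+1}`. Hence
`Ĩ_c ≪ K_{0,c} + p^{2s/3} Ĩ_{c+1}`, and four iterations starting from `c = 1` give
`J_{s+r,k}(X) ≪ ∑_{h ≤ 3} p^{2s + 2sh/3} K_{0,1+h} + p^{14s/3} Ĩ_5`. The last term is negligible:
it is controlled by `J_{s+r,k}(2X/M^5)`, which is smaller than `J_{s+r,k}(X)` by almost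
`M^{5(s+r)}`, whereas `14/3 < 5`. One of the four other terms therefore dominates.
-/

/-! ### Primes in `(n, 2n]` -/

section Primes

theorem factorization_primorial {p : ℕ} (hp : p.Prime) (n : ℕ) :
    (primorial n).factorization p = if p ≤ n then 1 else 0 := by
  split_ifs with h
  · exact Nat.factorization_eq_one_of_squarefree (squarefree_primorial n) hp
      (hp.dvd_primorial_iff.2 h)
  · exact Nat.factorization_eq_zero_of_not_dvd (mt hp.dvd_primorial_iff.1 h)

/-- The primes in `(2n/3, n]` divide `lcmUpto (2n)` but not `centralBinom n`. -/
theorem centralBinom_mul_primorial_dvd {n : ℕ} (hn : 2 < n) :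
    n.centralBinom * primorial n ∣ (2 * n).lcmUpto * primorial (2 * n / 3) := by
  have hC := n.centralBinom_ne_zero
  have hL := Nat.lcmUpto_ne_zero (2 * n)
  rw [← Nat.factorization_prime_le_iff_dvd (mul_ne_zero hC (primorial_ne_zero _))
    (mul_ne_zero hL (primorial_ne_zero _))]
  intro p hp
  have hCL : n.centralBinom.factorization p ≤ (2 * n).lcmUpto.factorization p :=
    (Nat.factorization_le_iff_dvd hC hL).2 (Chebyshev.choose_dvd_lcmUpto (by lia)) p
  have hlog : p ≤ n → 1 ≤ (2 * n).lcmUpto.factorization p := fun h => by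
    rw [Nat.factorization_lcmUpto _ hp]
    exact Nat.log_pos hp.one_lt (by lia)
  have hzero (h : p ≤ n) (h' : 2 * n < 3 * p) : n.centralBinom.factorization p = 0 :=
    Nat.factorization_centralBinom_of_two_mul_self_lt_three_mul hn h h'
  rw [Nat.factorization_mul hC (primorial_ne_zero _),
    Nat.factorization_mul hL (primorial_ne_zero _), Finsupp.add_apply, Finsupp.add_apply,
    factorization_primorial hp, factorization_primorial hp]
  grind

theorem log_centralBinom_add_theta_le {n : ℕ} (hn : 2 < n) :
    Real.log n.centralBinom + Chebyshev.theta n ≤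
      Chebyshev.psi (2 * n) + Chebyshev.theta (2 * n / 3) := by
  have hdvd := Nat.le_of_dvd (mul_pos (Nat.lcmUpto_pos _) (primorial_pos _))
    (centralBinom_mul_primorial_dvd hn)
  have hfloor : ⌊(2 * n / 3 : ℝ)⌋₊ = 2 * n / 3 := by
    exact_mod_cast Nat.floor_div_eq_div (K := ℝ) (2 * n) 3
  have hC : (n.centralBinom : ℝ) ≠ 0 := mod_cast n.centralBinom_ne_zero
  have hL : ((2 * n).lcmUpto : ℝ) ≠ 0 := mod_cast Nat.lcmUpto_ne_zero _
  have hP (m : ℕ) : (primorial m : ℝ) ≠ 0 := mod_cast primorial_ne_zero m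
  have hψ : Chebyshev.psi (2 * n) = Real.log (2 * n).lcmUpto := by
    exact_mod_cast Chebyshev.psi_eq_log_lcmUpto (2 * n)
  rw [hψ, Chebyshev.theta_eq_log_primorial, Chebyshev.theta_eq_log_primorial, hfloor,
    Nat.floor_natCast, ← Real.log_mul hC (hP _), ← Real.log_mul hL (hP _)]
  exact Real.log_le_log (mod_cast mul_pos n.centralBinom_pos (primorial_pos n)) (mod_cast hdvd)

theorem theta_two_mul_sub_theta_le (n : ℕ) :
    Chebyshev.theta (2 * n) - Chebyshev.theta n ≤
      #{p ∈ Ioc n (2 * n) | p.Prime} * Real.log (2 * n) := by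
  have hsplit : {p ∈ Ioc 0 (2 * n) | p.Prime} =
      {p ∈ Ioc 0 n | p.Prime} ∪ {p ∈ Ioc n (2 * n) | p.Prime} := by
    rw [← filter_union, Ioc_union_Ioc_eq_Ioc n.zero_le (by lia)]
  have hdisj : Disjoint {p ∈ Ioc 0 n | p.Prime} {p ∈ Ioc n (2 * n) | p.Prime} :=
    disjoint_filter_filter (Ioc_disjoint_Ioc_of_le le_rfl)
  have hfloor : ⌊(2 * n : ℝ)⌋₊ = 2 * n := by exact_mod_cast Nat.floor_natCast (R := ℝ) (2 * n)
  rw [Chebyshev.theta, Chebyshev.theta, hfloor, Nat.floor_natCast, hsplit, sum_union hdisj,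
    add_sub_cancel_left, ← nsmul_eq_mul]
  refine sum_le_card_nsmul _ _ _ fun p hp => ?_
  simp only [mem_filter, mem_Ioc] at hp
  exact Real.log_le_log (mod_cast hp.2.pos) (mod_cast hp.1.2)

theorem mul_log_four_le {n : ℕ} (hn : 4 ≤ n) :
    Real.log 4 / 6 * (2 * n) ≤
      (1 + 2 * √(2 * n) + #{p ∈ Ioc n (2 * n) | p.Prime}) * Real.log (2 * n) := by
  have hbinom : n * Real.log 4 ≤ Real.log (2 * n) + Real.log n.centralBinom := by
    have hC : (n.centralBinom : ℝ) ≠ 0 := mod_cast n.centralBinom_ne_zero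
    have h : (4 : ℝ) ^ n ≤ 2 * n * n.centralBinom := by
      exact_mod_cast (Nat.four_pow_lt_mul_centralBinom n hn).le.trans
        (Nat.mul_le_mul_right _ (by lia))
    rw [← Real.log_pow, ← Real.log_mul (by positivity) hC]
    exact Real.log_le_log (by positivity) h
  have hψ : Chebyshev.psi (2 * n) - Chebyshev.theta (2 * n) ≤ 2 * √(2 * n) * Real.log (2 * n) :=
    Chebyshev.psi_sub_theta_le (by norm_cast; lia)
  have hθ : Chebyshev.theta (2 * n / 3) ≤ Real.log 4 * (2 * n / 3) :=
    Chebyshev.theta_le_log4_mul_x (by positivity)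
  linarith [log_centralBinom_add_theta_le (n := n) (by lia), theta_two_mul_sub_theta_le n]

theorem tendsto_card_primes_Ioc :
    Tendsto (fun n : ℕ => #{p ∈ Ioc n (2 * n) | p.Prime}) atTop atTop := by
  refine tendsto_atTop.2 fun b => ?_
  have hlog : Real.log =o[atTop] fun x : ℝ => √x := by
    simpa only [Real.sqrt_eq_rpow] using isLittleO_log_rpow_atTop (by norm_num : (0 : ℝ) < 1 / 2)
  have hsqrt : (fun x : ℝ => 1 + 2 * √x + b) =O[atTop] fun x => √x := by
    have hconst (c : ℝ) : (fun _ : ℝ => c) =O[atTop] fun x => √x :=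
      (Asymptotics.isLittleO_const_left.2
        (Or.inr (tendsto_norm_atTop_atTop.comp Real.tendsto_sqrt_atTop))).isBigO
    exact ((hconst 1).add ((Asymptotics.isBigO_refl _ _).const_mul_left 2)).add (hconst b)
  have hlittle := (hsqrt.mul_isLittleO hlog).bound
    (c := Real.log 4 / 12) (by have := Real.log_pos (by norm_num : (1 : ℝ) < 4); positivity)
  have htwo : Tendsto (fun n : ℕ => (2 * n : ℝ)) atTop atTop :=
    tendsto_natCast_atTop_atTop.const_mul_atTop two_pos
  filter_upwards [htwo.eventually hlittle, eventually_ge_atTop 4] with n hn hn4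
  by_contra! hb
  have hn0 : (0 : ℝ) < 2 * n := by positivity
  have hlog4 : 0 < Real.log 4 := Real.log_pos (by norm_num)
  have hlog2n : 0 ≤ Real.log (2 * n) := Real.log_nonneg (by norm_cast; lia)
  rw [Real.norm_of_nonneg (by positivity), Real.mul_self_sqrt hn0.le, Real.norm_of_nonneg hn0.le]
    at hn
  have hcount : (#{p ∈ Ioc n (2 * n) | p.Prime} : ℝ) * Real.log (2 * n) ≤
      b * Real.log (2 * n) := by gcongr
  nlinarith [mul_log_four_le hn4, mul_pos hlog4 hn0]

end Primes

/-! ### Exponential sums and counts of solutions -/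

section ExponentialSums

variable {k : ℕ} {ι κ : Type*}

/-- The character `α ↦ e(α · n)` of the torus with frequency vector `n`. -/
def character (n : Fin k → ℤ) (α : Fin k → ℝ) : ℂ := ec (∑ j, α j * (n j : ℝ))

/-- The exponential sum with frequencies `Φ a`, for `a ∈ A`. -/
def expSum (Φ : ι → Fin k → ℤ) (A : Finset ι) (α : Fin k → ℝ) : ℂ := ∑ a ∈ A, character (Φ a) α

/-- The number of solutions of `Φ a = Φ b` with `a ∈ A` and `b ∈ B`. -/
def solCount (Φ : ι → Fin k → ℤ) (A B : Finset ι) : ℕ := #{ab ∈ A ×ˢ B | Φ ab.1 = Φ ab.2}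

/-- The frequency of a pair is the sum of the frequencies of its entries. -/
def pairFreq (Φ : ι → Fin k → ℤ) (Ψ : κ → Fin k → ℤ) (x : ι × κ) : Fin k → ℤ := Φ x.1 + Ψ x.2

theorem ec_zero : ec 0 = 1 := by simp [ec]

theorem ec_add (x y : ℝ) : ec (x + y) = ec x * ec y := by
  rw [ec, ec, ec, ← Complex.exp_add]
  push_cast
  ring_nf

theorem ec_sum (s : Finset ι) (x : ι → ℝ) : ec (∑ i ∈ s, x i) = ∏ i ∈ s, ec (x i) := by
  simpa only [ec, Complex.ofReal_sum, mul_sum] using Complex.exp_sum s _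

theorem conj_ec (x : ℝ) : starRingEnd ℂ (ec x) = ec (-x) := by
  simp [ec, ← Complex.exp_conj, Complex.conj_ofNat]

theorem character_add (m n : Fin k → ℤ) (α : Fin k → ℝ) :
    character (m + n) α = character m α * character n α := by
  simp [character, ← ec_add, ← sum_add_distrib, mul_add]

theorem character_sum (s : Finset ι) (n : ι → Fin k → ℤ) (α : Fin k → ℝ) :
    character (∑ i ∈ s, n i) α = ∏ i ∈ s, character (n i) α := by
  simp only [character, ← ec_sum, Finset.sum_apply, Int.cast_sum, mul_sum]
  rw [sum_comm]

theorem conj_character (n : Fin k → ℤ) (α : Fin k → ℝ) :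
    starRingEnd ℂ (character n α) = character (-n) α := by
  simp [character, conj_ec]

theorem continuous_character (n : Fin k → ℤ) : Continuous (character n) := by
  unfold character ec
  fun_prop

@[fun_prop]
theorem continuous_expSum (Φ : ι → Fin k → ℤ) (A : Finset ι) : Continuous (expSum Φ A) :=
  continuous_finsetSum _ fun a _ => continuous_character (Φ a)

theorem expSum_product (Φ : ι → Fin k → ℤ) (Ψ : κ → Fin k → ℤ) (A : Finset ι) (B : Finset κ)
    (α : Fin k → ℝ) : expSum (pairFreq Φ Ψ) (A ×ˢ B) α = expSum Φ A α * expSum Ψ B α := by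
  simp only [expSum, pairFreq, character_add, sum_mul_sum, sum_product]

theorem integrableOn_box {E : Type*} [NormedAddCommGroup E] {f : (Fin k → ℝ) → E}
    (hf : Continuous f) : IntegrableOn f (box k) :=
  (hf.continuousOn.integrableOn_compact
    (isCompact_univ_pi fun _ => isCompact_Icc (a := (0 : ℝ)) (b := 1))).mono_set
    (Set.pi_mono fun _ _ => Set.Ico_subset_Icc_self)

theorem setIntegral_ec_mul_intCast (n : ℤ) :
    ∫ x in Set.Ico (0 : ℝ) 1, ec (x * n) = if n = 0 then 1 else 0 := by
  rw [integral_Ico_eq_integral_Ioc, ← intervalIntegral.integral_of_le zero_le_one]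
  split_ifs with hn
  · simp [hn, ec_zero]
  · have hc : (2 * Real.pi * Complex.I * n : ℂ) ≠ 0 := by simp [hn, Real.pi_ne_zero]
    have hec (x : ℝ) : ec (x * n) = Complex.exp (2 * Real.pi * Complex.I * n * x) := by
      rw [ec]
      push_cast
      ring_nf
    have hperiod : Complex.exp (2 * Real.pi * Complex.I * n * (1 : ℝ)) = 1 :=
      Complex.exp_eq_one_iff.2 ⟨n, by push_cast; ring⟩
    simp_rw [hec]
    rw [integral_exp_mul_complex hc, hperiod]
    simp

theorem setIntegral_character (n : Fin k → ℤ) :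
    ∫ α in box k, character n α = if n = 0 then 1 else 0 := by
  simp_rw [character, ec_sum]
  rw [_root_.box, volume_pi, Measure.restrict_pi_pi,
    integral_fintype_prod_eq_prod (f := fun j (x : ℝ) => ec (x * n j))]
  simp_rw [setIntegral_ec_mul_intCast, prod_ite_zero, prod_const_one]
  simp [funext_iff]

theorem setIntegral_expSum_mul_conj (Φ : ι → Fin k → ℤ) (A B : Finset ι) :
    ∫ α in box k, expSum Φ A α * starRingEnd ℂ (expSum Φ B α) = solCount Φ A B := by
  have hexpand (α : Fin k → ℝ) : expSum Φ A α * starRingEnd ℂ (expSum Φ B α) =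
      ∑ ab ∈ A ×ˢ B, character (Φ ab.1 - Φ ab.2) α := by
    simp only [expSum, map_sum, sum_mul_sum, sum_product, conj_character, ← character_add,
      sub_eq_add_neg]
  simp_rw [hexpand]
  rw [integral_finsetSum _ fun ab _ => integrableOn_box (continuous_character _)]
  simp_rw [setIntegral_character, sub_eq_zero]
  rw [solCount, sum_boole]

theorem solCount_self_eq_integral (Φ : ι → Fin k → ℤ) (A : Finset ι) :
    (solCount Φ A A : ℝ) = ∫ α in box k, ‖expSum Φ A α‖ ^ 2 := by
  have h := setIntegral_expSum_mul_conj Φ A A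
  simp_rw [Complex.mul_conj'] at h
  exact_mod_cast h.symm

theorem solCount_le_integral (Φ : ι → Fin k → ℤ) (A B : Finset ι) :
    (solCount Φ A B : ℝ) ≤ ∫ α in box k, ‖expSum Φ A α‖ * ‖expSum Φ B α‖ := by
  have h := norm_integral_le_integral_norm (μ := volume.restrict (box k))
    fun α => expSum Φ A α * starRingEnd ℂ (expSum Φ B α)
  simpa [setIntegral_expSum_mul_conj] using h

theorem solCount_comm (Φ : ι → Fin k → ℤ) (A B : Finset ι) : solCount Φ A B = solCount Φ B A :=
  card_equiv (Equiv.prodComm ι ι) fun ab => by simp [and_comm, eq_comm]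

theorem solCount_mono (Φ : ι → Fin k → ℤ) {A A' B B' : Finset ι} (hA : A ⊆ A') (hB : B ⊆ B') :
    solCount Φ A B ≤ solCount Φ A' B' :=
  card_le_card (filter_subset_filter _ (product_subset_product hA hB))

theorem solCount_le_solCount_of_injOn {Φ : ι → Fin k → ℤ} {Ψ : κ → Fin k → ℤ} {A : Finset ι}
    {B : Finset κ} {f : ι → κ} (hf : Set.MapsTo f A B) (hinj : Set.InjOn f A)
    (hΦΨ : ∀ a ∈ A, ∀ b ∈ A, Φ a = Φ b → Ψ (f a) = Ψ (f b)) :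
    solCount Φ A A ≤ solCount Ψ B B := by
  refine card_le_card_of_injOn (Prod.map f f) (fun ab hab => ?_) ?_
  · simp only [coe_filter, mem_product, Set.mem_ofPred_eq] at hab ⊢
    exact ⟨⟨hf hab.1.1, hf hab.1.2⟩, hΦΨ _ hab.1.1 _ hab.1.2 hab.2⟩
  · exact (hinj.prodMap hinj).mono fun ab hab => by simpa using (mem_filter.1 hab).1

theorem solCount_le_of_cover {τ υ : Type*} (Φ : ι → Fin k → ℤ) {A : Finset ι} (s : Finset τ)
    (G : τ → Finset ι) (T : Finset υ) (H : υ → Finset ι)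
    (hcover : ∀ a ∈ A, (∃ i ∈ s, a ∈ G i) ∨ ∃ j ∈ T, a ∈ H j) :
    solCount Φ A A ≤
      ∑ i ∈ s, ∑ i' ∈ s, solCount Φ (G i) (G i') + 2 * ∑ j ∈ T, solCount Φ (H j) A := by
  have hA : solCount Φ A A ≤ ∑ i ∈ s, ∑ i' ∈ s, solCount Φ (G i) (G i') +
      (∑ j ∈ T, solCount Φ (H j) A + ∑ j ∈ T, solCount Φ A (H j)) := by
    simp only [solCount, ← sum_product']
    refine le_trans (card_le_card (t := ((s ×ˢ s).biUnion fun i =>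
      {ab ∈ G i.1 ×ˢ G i.2 | Φ ab.1 = Φ ab.2}) ∪ ((T.biUnion fun j =>
      {ab ∈ H j ×ˢ A | Φ ab.1 = Φ ab.2}) ∪ (T.biUnion fun j =>
      {ab ∈ A ×ˢ H j | Φ ab.1 = Φ ab.2}))) fun ab hab => ?_) ?_
    · have ⟨h, hΦ⟩ := mem_filter.1 hab
      have ⟨ha, hb⟩ := mem_product.1 h
      simp only [mem_union, mem_biUnion, mem_filter, mem_product]
      rcases hcover _ ha with ⟨i, hi, hai⟩ | ⟨j, hj, haj⟩
      · rcases hcover _ hb with ⟨i', hi', hbi⟩ | ⟨j, hj, hbj⟩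
        · exact .inl ⟨(i, i'), ⟨hi, hi'⟩, ⟨hai, hbi⟩, hΦ⟩
        · exact .inr (.inr ⟨j, hj, ⟨ha, hbj⟩, hΦ⟩)
      · exact .inr (.inl ⟨j, hj, ⟨haj, hb⟩, hΦ⟩)
    · exact (card_union_le _ _).trans (add_le_add card_biUnion_le
        ((card_union_le _ _).trans (add_le_add card_biUnion_le card_biUnion_le)))
  simp only [solCount_comm Φ A] at hA
  linarith

end ExponentialSums

/-! ### Tuples with distinct entries -/

section Tuples

variable {k : ℕ} {ι τ : Type*} [Fintype ι]

/-- The frequency of a tuple is the sum of the frequencies of its entries. -/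
def tupleFreq (Φ : τ → Fin k → ℤ) (x : ι → τ) : Fin k → ℤ := ∑ i, Φ (x i)

variable [DecidableEq ι]

/-- The tuples indexed by `ι` with all entries in `S`. -/
abbrev tuples (ι : Type*) [Fintype ι] [DecidableEq ι] (S : Finset τ) : Finset (ι → τ) :=
  Fintype.piFinset fun _ => S

theorem expSum_piFinset (Φ : τ → Fin k → ℤ) (S : ι → Finset τ) (α : Fin k → ℝ) :
    expSum (tupleFreq Φ) (Fintype.piFinset S) α = ∏ i, expSum Φ (S i) α := by
  simp only [expSum, tupleFreq, character_sum, prod_univ_sum]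

theorem expSum_tuples (Φ : τ → Fin k → ℤ) (S : Finset τ) (α : Fin k → ℝ) :
    expSum (tupleFreq Φ) (tuples ι S) α = expSum Φ S α ^ Fintype.card ι := by
  rw [expSum_piFinset, prod_const, card_univ]

theorem expSum_piFinset_ite (Φ : τ → Fin k → ℤ) (P : Finset ι) (A B : Finset τ) (α : Fin k → ℝ) :
    expSum (tupleFreq Φ) (Fintype.piFinset fun i => if i ∈ P then B else A) α =
      expSum Φ B α ^ #P * expSum Φ A α ^ (Fintype.card ι - #P) := by
  simp only [expSum_piFinset, apply_ite (expSum Φ), ite_apply]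
  rw [prod_ite, prod_const, prod_const, filter_univ_mem, ← card_compl]
  simp [compl_eq_univ_sdiff, ← filter_notMem_eq_sdiff]

theorem solCount_tuples_eq_integral (ι : Type*) [Fintype ι] [DecidableEq ι]
    (Φ : τ → Fin k → ℤ) (S : Finset τ) :
    (solCount (tupleFreq Φ) (tuples ι S) (tuples ι S) : ℝ) =
      ∫ α in box k, ‖expSum Φ S α‖ ^ (2 * Fintype.card ι) := by
  rw [solCount_self_eq_integral]
  simp_rw [expSum_tuples, norm_pow, ← pow_mul, mul_comm 2]

theorem solCount_two_smul (Φ : τ → Fin k → ℤ) (A B : Finset τ) :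
    solCount (fun x => 2 • Φ x) A B = solCount Φ A B :=
  congrArg card <| filter_congr fun _ _ => (smul_right_injective _ (two_ne_zero' ℕ)).eq_iff

theorem integral_expSum_two_smul (Φ : τ → Fin k → ℤ) (S : Finset τ) :
    ∫ α in box k, ‖expSum (fun x => 2 • Φ x) S α‖ ^ (2 * Fintype.card ι) =
      solCount (tupleFreq Φ) (tuples ι S) (tuples ι S) := by
  have h : tupleFreq (ι := ι) (fun x => 2 • Φ x) = fun x => 2 • tupleFreq Φ x := by
    funext x
    exact smul_sum.symm
  rw [← solCount_tuples_eq_integral, h, solCount_two_smul]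

theorem expSum_filter_apply_eq (Φ : τ → Fin k → ℤ) (S : Finset τ) {i j : ι} (hij : i ≠ j)
    (α : Fin k → ℝ) :
    expSum (tupleFreq Φ) {x ∈ tuples ι S | x i = x j} α =
      expSum (fun x => 2 • Φ x) S α * expSum Φ S α ^ (Fintype.card ι - 2) := by
  have hfiber (z : τ) (hz : z ∈ S) : {x ∈ {x ∈ tuples ι S | x i = x j} | x i = z} =
      Fintype.piFinset fun l => if l ∈ ({i, j} : Finset ι) then {z} else S := by
    ext x
    simp only [mem_filter, Fintype.mem_piFinset, mem_insert, mem_singleton]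
    constructor
    · rintro ⟨⟨hx, hxij⟩, hxi⟩ l
      split_ifs with hl
      · rcases hl with rfl | rfl <;> simp [hxi, ← hxij]
      · exact hx l
    · intro hx
      have hi : x i = z := by simpa using hx i
      have hj : x j = z := by simpa using hx j
      refine ⟨⟨fun l => ?_, hi.trans hj.symm⟩, hi⟩
      have hl := hx l
      split_ifs at hl
      · rwa [mem_singleton.1 hl]
      · exact hl
  rw [expSum, ← sum_fiberwise_of_maps_to (g := fun x => x i) (t := S)
    fun x hx => Fintype.mem_piFinset.1 (mem_filter.1 hx).1 i, expSum, sum_mul]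
  refine sum_congr rfl fun z hz => ?_
  rw [hfiber z hz, ← expSum, expSum_piFinset_ite, card_pair hij, expSum, sum_singleton, two_smul,
    character_add, sq]

theorem mul_pow_le_of_pos {g h ρ : ℝ} (hg : 0 ≤ g) (hh : 0 ≤ h) (hρ : 0 < ρ) (n : ℕ) :
    h * g ^ n ≤ ρ * (g ^ (n + 2) + h ^ (n + 2)) + (1 / ρ) ^ (n + 1) := by
  set m := max g h
  have hm : 0 ≤ m := le_max_of_le_left hg
  have hprod : h * g ^ n ≤ m ^ (n + 1) := by
    rw [pow_succ']
    exact mul_le_mul (le_max_right g h) (pow_le_pow_left₀ hg (le_max_left g h) n) (by positivity) hm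
  rcases le_total m (1 / ρ) with hmρ | hmρ
  · have : m ^ (n + 1) ≤ (1 / ρ) ^ (n + 1) := by gcongr
    have : 0 ≤ ρ * (g ^ (n + 2) + h ^ (n + 2)) := by positivity
    linarith
  · have hmax : m ^ (n + 2) ≤ g ^ (n + 2) + h ^ (n + 2) := by
      rcases max_choice g h with hgh | hgh <;> rw [show m = _ from hgh] <;>
        linarith [pow_nonneg hg (n + 2), pow_nonneg hh (n + 2)]
    calc h * g ^ n ≤ 1 * m ^ (n + 1) := by rwa [one_mul]
      _ ≤ ρ * m * m ^ (n + 1) := by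
        gcongr
        rwa [mul_comm, ← div_le_iff₀ hρ]
      _ = ρ * m ^ (n + 2) := by ring
      _ ≤ ρ * (g ^ (n + 2) + h ^ (n + 2)) := by gcongr
      _ ≤ _ := le_add_of_nonneg_right (by positivity)

theorem setIntegral_box_const (c : ℝ) : ∫ _α in box k, c = c := by
  have hvol : volume (box k) = 1 := by simp [_root_.box, volume_pi_pi]
  simp [Measure.real, hvol]

theorem solCount_filter_apply_eq_le (Φ : τ → Fin k → ℤ) (S : Finset τ) {i j : ι} (hij : i ≠ j)
    {ρ : ℝ} (hρ : 0 < ρ) :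
    (solCount (tupleFreq Φ) {x ∈ tuples ι S | x i = x j} (tuples ι S) : ℝ) ≤
      2 * ρ * solCount (tupleFreq Φ) (tuples ι S) (tuples ι S) +
        (1 / ρ) ^ (2 * Fintype.card ι - 1) := by
  obtain ⟨v, hv⟩ : ∃ v, Fintype.card ι = v + 2 :=
    Nat.exists_eq_add_of_le' (card_pair hij ▸ card_le_univ {i, j})
  set g : (Fin k → ℝ) → ℝ := fun α => ‖expSum Φ S α‖
  set h : (Fin k → ℝ) → ℝ := fun α => ‖expSum (fun x => 2 • Φ x) S α‖
  calc (solCount (tupleFreq Φ) {x ∈ tuples ι S | x i = x j} (tuples ι S) : ℝ)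
      ≤ ∫ α in box k, h α * g α ^ (2 * v + 2) := by
        refine (solCount_le_integral _ _ _).trans_eq (integral_congr_ae (.of_forall fun α => ?_))
        simp only [expSum_filter_apply_eq Φ S hij, expSum_tuples, norm_mul, norm_pow, hv, g, h]
        rw [Nat.add_sub_cancel, mul_assoc, ← pow_add]
        ring_nf
    _ ≤ ∫ α in box k, (ρ * (g α ^ (2 * Fintype.card ι) + h α ^ (2 * Fintype.card ι)) +
          (1 / ρ) ^ (2 * Fintype.card ι - 1)) := by
        refine integral_mono (integrableOn_box (by fun_prop)) (integrableOn_box (by fun_prop))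
          fun α => ?_
        rw [hv]
        exact mul_pow_le_of_pos (norm_nonneg _) (norm_nonneg _) hρ (2 * v + 2)
    _ = _ := by
        rw [integral_add (integrableOn_box (by fun_prop)) (integrableOn_box (by fun_prop)),
          integral_const_mul,
          integral_add (integrableOn_box (by fun_prop)) (integrableOn_box (by fun_prop)),
          integral_expSum_two_smul, ← solCount_tuples_eq_integral, setIntegral_box_const]
        ring

/-- The tuples indexed by `ι` with pairwise distinct entries in `S`. -/
def injTuples (ι : Type*) [Fintype ι] [DecidableEq ι] (S : Finset τ) : Finset (ι → τ) :=
  {x ∈ tuples ι S | Function.Injective x}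

theorem mem_injTuples {ι : Type*} [Fintype ι] [DecidableEq ι] {S : Finset τ} {x : ι → τ} :
    x ∈ injTuples ι S ↔ x ∈ tuples ι S ∧ Function.Injective x :=
  mem_filter

theorem exists_solCount_tuples_le_injTuples (ι : Type*) [Fintype ι] [DecidableEq ι] :
    ∃ C : ℝ, ∀ {k : ℕ} (Φ : τ → Fin k → ℤ) (S : Finset τ),
      (solCount (tupleFreq Φ) (tuples ι S) (tuples ι S) : ℝ) ≤
        2 * solCount (tupleFreq Φ) (injTuples ι S) (injTuples ι S) + C := by
  set P : ℝ := ((#(univ : Finset ι).offDiag : ℕ) : ℝ) with hP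
  set ρ : ℝ := 1 / (8 * (P + 1)) with hρ
  have hρ0 : 0 < ρ := by positivity
  set E : ℝ := (1 / ρ) ^ (2 * Fintype.card ι - 1)
  refine ⟨4 * P * E, fun Φ S => ?_⟩
  set J := solCount (tupleFreq Φ) (tuples ι S) (tuples ι S)
  have hcover := solCount_le_of_cover (tupleFreq Φ) (A := tuples ι S) {()}
    (fun _ => injTuples ι S) univ.offDiag (fun ij : ι × ι => {x ∈ tuples ι S | x ij.1 = x ij.2})
    fun x hx => by
      by_cases hinj : Function.Injective x
      · exact .inl ⟨(), mem_singleton_self _, mem_injTuples.2 ⟨hx, hinj⟩⟩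
      · obtain ⟨i, j, hxij, hij⟩ := Function.not_injective_iff.1 hinj
        exact .inr ⟨(i, j), by simpa using hij, mem_filter.2 ⟨hx, hxij⟩⟩
  rw [sum_singleton, sum_singleton] at hcover
  have hdiag : (∑ ij ∈ (univ : Finset ι).offDiag,
      solCount (tupleFreq Φ) {x ∈ tuples ι S | x ij.1 = x ij.2} (tuples ι S) : ℝ) ≤
        P * (2 * ρ * J + E) := by
    rw [hP, ← nsmul_eq_mul]
    exact sum_le_card_nsmul _ _ _ fun ij hij =>
      solCount_filter_apply_eq_le Φ S (mem_offDiag.1 hij).2.2 hρ0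
  have hPρ : P * ρ ≤ 1 / 8 := by
    rw [hρ, mul_one_div, div_le_iff₀ (by positivity)]
    linarith
  have hJ : P * ρ * J ≤ 1 / 8 * J := by gcongr
  have hcover' : (J : ℝ) ≤ solCount (tupleFreq Φ) (injTuples ι S) (injTuples ι S) +
      2 * ∑ ij ∈ (univ : Finset ι).offDiag,
        (solCount (tupleFreq Φ) {x ∈ tuples ι S | x ij.1 = x ij.2} (tuples ι S) : ℝ) :=
    mod_cast hcover
  linarith

end Tuples

/-! ### Power sums and residue classes -/

section PowerSums

variable {k : ℕ} {ι : Type*}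

/-- The point `(x, x², …, x^k)` of the moment curve. -/
def momentVec (k : ℕ) (x : ℤ) : Fin k → ℤ := fun j => x ^ ((j : ℕ) + 1)

/-- The integers `1 ≤ x ≤ X`. -/
abbrev intsUpTo (X : ℝ) : Finset ℤ := Icc 1 ⌊X⌋

/-- The integers `1 ≤ x ≤ X` congruent to `ξ` modulo `m`. -/
def residueClass (X : ℝ) (m ξ : ℤ) : Finset ℤ := {x ∈ intsUpTo X | x ≡ ξ [ZMOD m]}

/-- The entries of `x` are pairwise incongruent modulo `m`. -/
def DistinctMod (m : ℕ) (x : ι → ℤ) : Prop := Function.Injective fun i => (x i : ZMod m)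

theorem mem_residueClass {X : ℝ} {m ξ x : ℤ} :
    x ∈ residueClass X m ξ ↔ x ∈ intsUpTo X ∧ x ≡ ξ [ZMOD m] :=
  mem_filter

theorem distinctMod_iff {m : ℕ} {x : ι → ℤ} :
    DistinctMod m x ↔ ∀ i j, x i ≡ x j [ZMOD m] → i = j := by
  simp only [DistinctMod, Function.Injective, ZMod.intCast_eq_intCast_iff]

theorem DistinctMod.congr {m : ℕ} {x y : ι → ℤ} (hx : DistinctMod m x)
    (hxy : ∀ i, x i ≡ y i [ZMOD m]) : DistinctMod m y := by
  have h : (fun i => (y i : ZMod m)) = fun i => (x i : ZMod m) :=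
    funext fun i => ((ZMod.intCast_eq_intCast_iff _ _ _).2 (hxy i)).symm
  rwa [DistinctMod, h]

variable [Fintype ι]

/-- The power sums of degrees `1, …, k` of a tuple of integers. -/
abbrev powerSums (k : ℕ) : (ι → ℤ) → Fin k → ℤ := tupleFreq (momentVec k)

variable [DecidableEq ι]

/-- The tuples with values in `[1, X]` underlying the sum `F(α;η)`. -/
def avoidingTuples (p r : ℕ) (X : ℝ) (η : ℤ) : Finset (Fin r → ℤ) :=
  {x ∈ tuples (Fin r) (intsUpTo X) | DistinctMod p x ∧ ∀ i, ¬ x i ≡ η [ZMOD p]}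

/-- The tuples with values in `[1, X]` underlying the conditioned sum `F_c(α;ξ)`. -/
def conditionedTuples (p r : ℕ) (X : ℝ) (c : ℕ) (ξ : ℤ) : Finset (Fin r → ℤ) :=
  {x ∈ tuples (Fin r) (residueClass X (p ^ c) ξ) | DistinctMod (p ^ (c + 1)) x}

theorem avoidingTuples_congr {p r : ℕ} {X : ℝ} {η ξ : ℤ} (h : η ≡ ξ [ZMOD p]) :
    avoidingTuples p r X η = avoidingTuples p r X ξ :=
  filter_congr fun _ _ => and_congr_right' <| forall_congr' fun _ =>
    not_congr ⟨fun hx => hx.trans h, fun hx => hx.trans h.symm⟩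

theorem Jcount_eq_solCount (u k : ℕ) (X : ℝ) :
    Jcount u k X = solCount (powerSums k) (tuples (Fin u) (intsUpTo X))
      (tuples (Fin u) (intsUpTo X)) := by
  rw [Jcount, solCount, ← Set.ncard_coe_finset]
  congr 1
  ext ⟨x, y⟩
  simp only [Set.mem_ofPred_eq, coe_filter, mem_product, Fintype.mem_piFinset, mem_Icc,
    Int.le_floor, and_assoc]
  refine and_congr_right fun _ => and_congr_right fun _ => ?_
  simp only [funext_iff, tupleFreq, Finset.sum_apply, momentVec, sum_sub_distrib, sub_eq_zero]
  refine ⟨fun h j => h _ ⟨by omega, by omega⟩, fun h j hj => ?_⟩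
  simpa [Nat.sub_add_cancel hj.1] using h ⟨j - 1, by omega⟩

theorem solCount_tuples_intsUpTo (ι : Type*) [Fintype ι] [DecidableEq ι] (k : ℕ) (X : ℝ) :
    solCount (powerSums k) (tuples ι (intsUpTo X)) (tuples ι (intsUpTo X)) =
      Jcount (Fintype.card ι) k X := by
  rw [Jcount_eq_solCount, ← Nat.cast_inj (R := ℝ), solCount_tuples_eq_integral,
    solCount_tuples_eq_integral, Fintype.card_fin]

theorem Jcount_eq_integral (u k : ℕ) (X : ℝ) :
    (Jcount u k X : ℝ) = ∫ α in box k, ‖expSum (momentVec k) (intsUpTo X) α‖ ^ (2 * u) := by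
  rw [Jcount_eq_solCount, solCount_tuples_eq_integral, Fintype.card_fin]

theorem toIocMod_zero_modEq {m : ℤ} (hm : 0 < m) (x : ℤ) : toIocMod hm 0 x ≡ x [ZMOD m] := by
  rw [Int.modEq_iff_dvd, self_sub_toIocMod, smul_eq_mul]
  exact dvd_mul_left _ _

theorem toIocMod_zero_mem_Icc {m : ℤ} (hm : 0 < m) (x : ℤ) : toIocMod hm 0 x ∈ Icc 1 m := by
  have h := toIocMod_mem_Ioc hm 0 x
  simp only [zero_add, Set.mem_Ioc] at h
  exact mem_Icc.2 h

theorem toIocMod_zero_eq_iff {m x v : ℤ} (hm : 0 < m) (hv : v ∈ Icc 1 m) :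
    toIocMod hm 0 x = v ↔ x ≡ v [ZMOD m] := by
  rw [toIocMod_eq_iff, zero_add, Set.mem_Ioc, Int.modEq_comm, Int.modEq_iff_dvd]
  refine ⟨?_, fun ⟨z, hz⟩ => ⟨mem_Icc.1 hv, z, ?_⟩⟩
  · rintro ⟨-, z, rfl⟩
    simp
  · rw [smul_eq_mul]
    linarith

theorem sum_prod_expSum_modEq (Φ : ℤ → Fin k → ℤ) (S : Finset ℤ) {m : ℤ} (hm : 0 < m)
    {Q : (ι → ℤ) → Prop} [DecidablePred Q]
    (hQ : ∀ x y, (∀ i, x i ≡ y i [ZMOD m]) → Q x → Q y) (α : Fin k → ℝ) :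
    ∑ v ∈ tuples ι (Icc 1 m) with Q v, ∏ i, expSum Φ {x ∈ S | x ≡ v i [ZMOD m]} α =
      expSum (tupleFreq Φ) {x ∈ tuples ι S | Q x} α := by
  rw [eq_comm, expSum, ← sum_fiberwise_of_maps_to (g := fun x i => toIocMod hm 0 (x i))
    (t := {v ∈ tuples ι (Icc 1 m) | Q v})]
  · refine sum_congr rfl fun v hv => ?_
    have ⟨hv1, hv2⟩ := mem_filter.1 hv
    rw [← expSum_piFinset, expSum]
    congr 1
    ext x
    simp only [mem_filter, Fintype.mem_piFinset, funext_iff,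
      fun i => toIocMod_zero_eq_iff (x := x i) hm (Fintype.mem_piFinset.1 hv1 i)]
    exact ⟨fun h i => ⟨h.1.1 i, h.2 i⟩, fun h => ⟨⟨fun i => (h i).1,
      hQ v x (fun i => (h i).2.symm) hv2⟩, fun i => (h i).2⟩⟩
  · intro x hx
    exact mem_filter.2 ⟨Fintype.mem_piFinset.2 fun i => toIocMod_zero_mem_Icc hm _,
      hQ x _ (fun i => (toIocMod_zero_modEq hm _).symm) (mem_filter.1 hx).2⟩

theorem fexp_eq_expSum (k p : ℕ) (X : ℝ) (c : ℕ) (ξ : ℤ) :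
    fexp k p X c ξ = expSum (momentVec k) (residueClass X (p ^ c) ξ) := by
  funext α
  simp [fexp, expSum, character, momentVec, residueClass]

theorem Fexp_eq_expSum {p : ℕ} (hp : 0 < p) (k r : ℕ) (X : ℝ) (c : ℕ) (ξ : ℤ) :
    Fexp k p r X c ξ = expSum (powerSums k) (conditionedTuples p r X c ξ) := by
  have hXi : XiSet p r c ξ = ({v ∈ tuples (Fin r) (Icc 1 ((p : ℤ) ^ (c + 1))) |
      (∀ i, v i ≡ ξ [ZMOD (p : ℤ) ^ c]) ∧ DistinctMod (p ^ (c + 1)) v} : Finset _) := by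
    ext v
    rw [mem_coe, mem_filter, Fintype.mem_piFinset]
    simp only [XiSet, DistinctMod, Set.mem_ofPred_eq, mem_Icc]
  have hset : conditionedTuples p r X c ξ = {x ∈ tuples (Fin r) (intsUpTo X) |
      (∀ i, x i ≡ ξ [ZMOD (p : ℤ) ^ c]) ∧ DistinctMod (p ^ (c + 1)) x} := by
    ext x
    simp only [conditionedTuples, mem_filter, Fintype.mem_piFinset, mem_residueClass, forall_and,
      and_assoc]
  funext α
  rw [Fexp, hXi, finsum_mem_coe_finset, hset,
    ← sum_prod_expSum_modEq _ _ (by positivity : (0 : ℤ) < (p : ℤ) ^ (c + 1))]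
  · simp only [fexp_eq_expSum, residueClass]
  · refine fun x y hxy hx => ⟨fun i => ?_, hx.2.congr (mod_cast hxy)⟩
    exact ((hxy i).of_dvd (pow_dvd_pow _ c.le_succ)).symm.trans (hx.1 i)

theorem Ftilde_eq_expSum {p : ℕ} (hp : 0 < p) (k r : ℕ) (X : ℝ) (η : ℤ) :
    Ftilde k p r X η = expSum (powerSums k) (avoidingTuples p r X η) := by
  have hXi : XiTilde p r η = ({v ∈ tuples (Fin r) (Icc 1 (p : ℤ)) |
      DistinctMod p v ∧ ∀ i, ¬ v i ≡ η [ZMOD p]} : Finset _) := by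
    ext v
    simp [XiTilde, XiSet, distinctMod_iff, Function.Injective, ZMod.intCast_eq_intCast_iff,
      Int.modEq_one, and_assoc]
  funext α
  rw [Ftilde, hXi, finsum_mem_coe_finset, avoidingTuples,
    ← sum_prod_expSum_modEq _ _ (by positivity : (0 : ℤ) < (p : ℤ))]
  · simp only [fexp_eq_expSum, residueClass, pow_one]
  · exact fun x y hxy hx => ⟨hx.1.congr hxy, fun i hi => hx.2 i ((hxy i).trans hi)⟩

end PowerSums

/-! ### Conditioning -/

section Conditioning

section RowArrays

variable {k : ℕ} {ι κ τ : Type*} [Fintype ι] [DecidableEq ι]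

/-- The arrays `w : ι × κ → τ` which, after the positions are permuted by `σ`, have all their rows
in `A`. -/
def rowArrays (σ : Equiv.Perm (ι × κ)) (A : Finset (κ → τ)) : Finset (ι × κ → τ) :=
  (tuples ι A).map ((Equiv.curry ι κ τ).symm.trans (σ.arrowCongr (Equiv.refl τ))).toEmbedding

theorem mem_rowArrays {σ : Equiv.Perm (ι × κ)} {A : Finset (κ → τ)} {w : ι × κ → τ} :
    w ∈ rowArrays σ A ↔ ∀ i, (fun m => w (σ (i, m))) ∈ A := by
  rw [rowArrays, mem_map_equiv, Fintype.mem_piFinset]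
  rfl

theorem expSum_rowArrays [Fintype κ] (Φ : τ → Fin k → ℤ) (σ : Equiv.Perm (ι × κ))
    (A : Finset (κ → τ)) (α : Fin k → ℝ) :
    expSum (tupleFreq Φ) (rowArrays σ A) α = expSum (tupleFreq Φ) A α ^ Fintype.card ι := by
  rw [← expSum_tuples, rowArrays, expSum, sum_map, expSum]
  refine sum_congr rfl fun y _ => congrArg (character · α) ?_
  rw [tupleFreq, ← Equiv.sum_comp σ, Fintype.sum_prod_type]
  simp [tupleFreq]

end RowArrays

/-- Sort the entries and read the array column by column: two equal entries in the same row are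
then at least `t` places apart. -/
theorem exists_perm_rows_injective {β : Type*} [DecidableEq β] {t r : ℕ} (v : Fin t × Fin r → β)
    (hv : ∀ a, #{i | v i = a} ≤ t) :
    ∃ σ : Equiv.Perm (Fin t × Fin r), ∀ i, Function.Injective fun m => v (σ (i, m)) := by
  let _ : LinearOrder β := linearOrderOfSTO WellOrderingRel
  set e : Fin t × Fin r ≃ Fin (r * t) := (Equiv.prodComm _ _).trans finProdFinEquiv
  have he (i m) : (e (i, m) : ℕ) = i + t * m := by simp [e, finProdFinEquiv]
  set w : Fin (r * t) → β := v ∘ e.symm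
  have hmono : Monotone (w ∘ Tuple.sort w) := Tuple.monotone_sort w
  have hne (i) {m m' : Fin r} (hm : m < m') :
      (w ∘ Tuple.sort w) (e (i, m)) ≠ (w ∘ Tuple.sort w) (e (i, m')) := by
    intro heq
    have hcard : #(Icc (e (i, m)) (e (i, m'))) ≤
        #{j | v j = (w ∘ Tuple.sort w) (e (i, m))} := by
      refine card_le_card_of_injOn (fun q => e.symm (Tuple.sort w q)) (fun q hq => ?_)
        (e.symm.injective.comp (Tuple.sort w).injective).injOn
      have hq := mem_Icc.1 hq
      exact mem_filter.2 ⟨mem_univ _, ((hmono hq.2).trans_eq heq.symm).antisymm (hmono hq.1)⟩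
    have hle := hcard.trans (hv _)
    rw [Fin.card_Icc, he, he] at hle
    have : t * (m + 1) ≤ t * (m' : ℕ) := Nat.mul_le_mul_left _ hm
    rw [Nat.mul_add] at this
    omega
  refine ⟨(e.trans (Tuple.sort w)).trans e.symm, fun i m m' h => ?_⟩
  rcases lt_trichotomy m m' with hlt | heq | hgt
  · exact (hne i hlt h).elim
  · exact heq
  · exact (hne i hgt h.symm).elim

theorem pow_mul_pow_le {g h l : ℝ} (hg : 0 ≤ g) (hh : 0 ≤ h) (hl : 0 < l) (a b : ℕ) :
    h ^ a * g ^ b ≤ l ^ a * g ^ (a + b) + (1 / l) ^ b * h ^ (a + b) := by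
  rcases le_total h (l * g) with hle | hle
  · calc h ^ a * g ^ b ≤ (l * g) ^ a * g ^ b := by gcongr
      _ = l ^ a * g ^ (a + b) := by ring
      _ ≤ _ := le_add_of_nonneg_right (by positivity)
  · have hle' : g ≤ 1 / l * h := by rwa [one_div_mul_eq_div, le_div_iff₀ hl, mul_comm]
    calc h ^ a * g ^ b ≤ h ^ a * (1 / l * h) ^ b := by gcongr
      _ = (1 / l) ^ b * h ^ (a + b) := by ring
      _ ≤ _ := le_add_of_nonneg_left (by positivity)

/-- The mean value `Ĩ_c(X;η)` of `|F(α;η)² f_c(α;η)^{2s}|`. -/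
def Itilde (k p r s : ℕ) (X : ℝ) (c : ℕ) (η : ℤ) : ℝ :=
  ∫ α in box k, ‖Ftilde k p r X η α‖ ^ 2 * ‖fexp k p X c η α‖ ^ (2 * s)

section

variable {k p r s t c : ℕ} {X : ℝ} {η : ℤ}

theorem Itilde_nonneg : 0 ≤ Itilde k p r s X c η := integral_nonneg fun _ => by positivity

theorem Ktilde_nonneg : 0 ≤ Ktilde k p r t X c η := integral_nonneg fun _ => by positivity

theorem Itilde_eq_integral (hp : 0 < p) : Itilde k p r s X c η =
    ∫ α in box k, ‖expSum (powerSums k) (avoidingTuples p r X η) α‖ ^ 2 *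
      ‖expSum (momentVec k) (residueClass X (p ^ c) η) α‖ ^ (2 * s) := by
  rw [Itilde, Ftilde_eq_expSum hp, fexp_eq_expSum]

theorem Itilde_eq_solCount (hp : 0 < p) (ι : Type*) [Fintype ι] [DecidableEq ι] :
    Itilde k p r (Fintype.card ι) X c η = solCount (pairFreq (powerSums k) (powerSums k))
      (avoidingTuples p r X η ×ˢ tuples ι (residueClass X (p ^ c) η))
      (avoidingTuples p r X η ×ˢ tuples ι (residueClass X (p ^ c) η)) := by
  rw [solCount_self_eq_integral, Itilde_eq_integral hp]
  simp_rw [expSum_product, expSum_tuples, norm_mul, mul_pow, norm_pow, ← pow_mul, mul_comm 2]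

theorem solCount_rowArrays_le_Ktilde (hp : 0 < p) (σ σ' : Equiv.Perm (Fin t × Fin r)) :
    (solCount (pairFreq (powerSums k) (powerSums k))
      (avoidingTuples p r X η ×ˢ rowArrays σ (conditionedTuples p r X c η))
      (avoidingTuples p r X η ×ˢ rowArrays σ' (conditionedTuples p r X c η)) : ℝ) ≤
    Ktilde k p r t X c η := by
  refine (solCount_le_integral _ _ _).trans_eq ?_
  rw [Ktilde, Ftilde_eq_expSum hp, Fexp_eq_expSum hp]
  congr! 2 with α
  simp only [expSum_product, expSum_rowArrays, Fintype.card_fin, norm_mul, norm_pow]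
  ring

/-- The arrays in the class of `η` modulo `p ^ c` whose entries with index in `S` all lie in the
class of `ξ` modulo `p ^ (c + 1)`. -/
def congruentArrays {ι : Type*} [Fintype ι] [DecidableEq ι] (p : ℕ) (X : ℝ) (c : ℕ) (η ξ : ℤ)
    (S : Finset ι) : Finset (ι → ℤ) :=
  Fintype.piFinset fun i =>
    if i ∈ S then residueClass X (p ^ (c + 1)) ξ else residueClass X (p ^ c) η

theorem solCount_congruentArrays_le (hp : 0 < p) {ι : Type*} [Fintype ι] [DecidableEq ι]
    {ξ : ℤ} (hξ : η ≡ ξ [ZMOD p]) (S : Finset ι) {l : ℝ} (hl : 0 < l) :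
    (solCount (pairFreq (powerSums k) (powerSums k))
      (avoidingTuples p r X η ×ˢ congruentArrays p X c η ξ S)
      (avoidingTuples p r X η ×ˢ tuples ι (residueClass X (p ^ c) η)) : ℝ) ≤
    l ^ #S * Itilde k p r (Fintype.card ι) X c η +
      (1 / l) ^ (2 * Fintype.card ι - #S) * Itilde k p r (Fintype.card ι) X (c + 1) ξ := by
  set F : (Fin k → ℝ) → ℝ := fun α => ‖expSum (powerSums k) (avoidingTuples p r X η) α‖
  set g : (Fin k → ℝ) → ℝ := fun α => ‖expSum (momentVec k) (residueClass X (p ^ c) η) α‖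
  set h : (Fin k → ℝ) → ℝ := fun α => ‖expSum (momentVec k) (residueClass X (p ^ (c + 1)) ξ) α‖
  have hS : #S ≤ Fintype.card ι := card_le_univ S
  have hsplit : #S + (2 * Fintype.card ι - #S) = 2 * Fintype.card ι := by omega
  have hexp : Fintype.card ι - #S + Fintype.card ι = 2 * Fintype.card ι - #S := by omega
  refine (solCount_le_integral _ _ _).trans ?_
  rw [Itilde_eq_integral hp, Itilde_eq_integral hp, ← avoidingTuples_congr hξ,
    ← integral_const_mul, ← integral_const_mul,
    ← integral_add (integrableOn_box (by fun_prop)) (integrableOn_box (by fun_prop))]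
  refine integral_mono (integrableOn_box (by fun_prop)) (integrableOn_box (by fun_prop)) fun α => ?_
  simp only [congruentArrays, expSum_product, expSum_piFinset_ite, expSum_tuples, norm_mul,
    norm_pow]
  calc F α * (h α ^ #S * g α ^ (Fintype.card ι - #S)) * (F α * g α ^ Fintype.card ι)
      = F α ^ 2 * (h α ^ #S * g α ^ (2 * Fintype.card ι - #S)) := by
        rw [← hexp, pow_add]
        ring
    _ ≤ F α ^ 2 * (l ^ #S * g α ^ (2 * Fintype.card ι) +
          (1 / l) ^ (2 * Fintype.card ι - #S) * h α ^ (2 * Fintype.card ι)) := by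
        rw [← hsplit, Nat.add_sub_cancel_left]
        gcongr
        exact pow_mul_pow_le (norm_nonneg _) (norm_nonneg _) hl _ _
    _ = _ := by ring

theorem exists_modEq_add_pow_mul (hp : 0 < p) {x : ℤ} (hx : x ≡ η [ZMOD (p : ℤ) ^ c]) :
    ∃ m ∈ range p, x ≡ η + (p : ℤ) ^ c * m [ZMOD (p : ℤ) ^ (c + 1)] := by
  obtain ⟨q, hq⟩ := hx.symm.dvd
  have hp' : (0 : ℤ) < p := mod_cast hp
  have hq0 := Int.emod_nonneg q hp'.ne'
  refine ⟨(q % p).toNat, mem_range.2 ((Int.toNat_lt hq0).2 (Int.emod_lt_of_pos q hp')), ?_⟩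
  rw [Int.toNat_of_nonneg hq0, eq_add_of_sub_eq' hq, pow_succ]
  exact (Int.mod_modEq q p).symm.mul_left'.add_left _

theorem mem_rowArrays_or_congruentArrays (hp : 0 < p) {w : Fin t × Fin r → ℤ}
    (hw : w ∈ tuples (Fin t × Fin r) (residueClass X (p ^ c) η)) :
    (∃ σ, w ∈ rowArrays σ (conditionedTuples p r X c η)) ∨
    ∃ S ∈ powersetCard (t + 1) univ, ∃ m ∈ range p,
      w ∈ congruentArrays p X c η (η + p ^ c * m) S := by
  rw [Fintype.mem_piFinset] at hw
  by_cases hv : ∀ a : ZMod (p ^ (c + 1)), #{i | (w i : ZMod (p ^ (c + 1))) = a} ≤ t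
  · obtain ⟨σ, hσ⟩ := exists_perm_rows_injective (fun i => (w i : ZMod (p ^ (c + 1)))) hv
    exact .inl ⟨σ, mem_rowArrays.2 fun i =>
      mem_filter.2 ⟨Fintype.mem_piFinset.2 fun m => hw _, hσ i⟩⟩
  · push Not at hv
    obtain ⟨a, ha⟩ := hv
    obtain ⟨S, hS, hcard⟩ := exists_subset_card_eq (Nat.succ_le_of_lt ha)
    have hSa (i) (hi : i ∈ S) : (w i : ZMod (p ^ (c + 1))) = a := (mem_filter.1 (hS hi)).2
    obtain ⟨i₀, hi₀⟩ : S.Nonempty := card_pos.1 (hcard ▸ t.succ_pos)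
    obtain ⟨m, hm, hmod⟩ := exists_modEq_add_pow_mul hp (mem_residueClass.1 (hw i₀)).2
    refine .inr ⟨S, mem_powersetCard.2 ⟨subset_univ _, hcard⟩, m, hm,
      Fintype.mem_piFinset.2 fun i => ?_⟩
    split_ifs with hi
    · have hii₀ := (ZMod.intCast_eq_intCast_iff _ _ _).1 ((hSa i hi).trans (hSa i₀ hi₀).symm)
      rw [Nat.cast_pow] at hii₀
      exact mem_residueClass.2 ⟨(mem_residueClass.1 (hw i)).1, hii₀.trans hmod⟩
    · exact hw i

theorem solCount_congruentArrays_le_of_card (hp : 0 < p) (hc : 1 ≤ c) {B l : ℝ} (hl : 0 < l)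
    {S : Finset (Fin t × Fin r)} (hS : #S = t + 1) {m : ℤ}
    (hB : Itilde k p r (r * t) X (c + 1) (η + p ^ c * m) ≤ B) :
    (solCount (pairFreq (powerSums k) (powerSums k))
      (avoidingTuples p r X η ×ˢ congruentArrays p X c η (η + p ^ c * m) S)
      (avoidingTuples p r X η ×ˢ tuples (Fin t × Fin r) (residueClass X (p ^ c) η)) : ℝ) ≤
    l ^ (t + 1) * Itilde k p r (r * t) X c η + (1 / l) ^ (2 * (r * t) - (t + 1)) * B := by
  have hcard : Fintype.card (Fin t × Fin r) = r * t := by simp [mul_comm]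
  have hη : η ≡ η + p ^ c * m [ZMOD p] := by
    simpa using (Int.modEq_zero_iff_dvd.2
      ((dvd_pow_self (p : ℤ) (by omega : c ≠ 0)).mul_right m)).symm.add_left η
  have h := solCount_congruentArrays_le (k := k) (r := r) (X := X) (c := c) hp hη S hl
  rw [hS, hcard] at h
  exact h.trans (by gcongr)

theorem Itilde_le_Ktilde_add (hp : 0 < p) (hc : 1 ≤ c) {B l : ℝ} (hl : 0 < l)
    (hB : ∀ m ∈ range p, Itilde k p r (r * t) X (c + 1) (η + p ^ c * m) ≤ B) :
    Itilde k p r (r * t) X c η ≤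
      (Fintype.card (Equiv.Perm (Fin t × Fin r)) : ℝ) ^ 2 * Ktilde k p r t X c η +
        2 * (#(powersetCard (t + 1) (univ : Finset (Fin t × Fin r))) * (p *
          (l ^ (t + 1) * Itilde k p r (r * t) X c η +
            (1 / l) ^ (2 * (r * t) - (t + 1)) * B))) := by
  set A := avoidingTuples p r X η
  set D := conditionedTuples p r X c η
  set W := tuples (Fin t × Fin r) (residueClass X (p ^ c) η)
  set 𝒮 := powersetCard (t + 1) (univ : Finset (Fin t × Fin r)) ×ˢ range p
  set V : Finset (Fin t × Fin r) × ℕ → Finset (Fin t × Fin r → ℤ) := fun Sm =>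
    congruentArrays p X c η (η + p ^ c * Sm.2) Sm.1
  have hcover := solCount_le_of_cover (pairFreq (powerSums k) (powerSums k)) (A := A ×ˢ W)
    (univ : Finset (Equiv.Perm (Fin t × Fin r))) (fun σ => A ×ˢ rowArrays σ D) 𝒮
    (fun Sm => A ×ˢ V Sm) fun a ha => by
      have ⟨ha1, ha2⟩ := mem_product.1 ha
      rcases mem_rowArrays_or_congruentArrays hp ha2 with ⟨σ, hσ⟩ | ⟨S, hS, m, hm, hV⟩
      · exact .inl ⟨σ, mem_univ σ, mem_product.2 ⟨ha1, hσ⟩⟩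
      · exact .inr ⟨(S, m), mem_product.2 ⟨hS, hm⟩, mem_product.2 ⟨ha1, hV⟩⟩
  have hrows := sum_le_card_nsmul univ _ _ fun σ _ => sum_le_card_nsmul univ _ _ fun σ' _ =>
    solCount_rowArrays_le_Ktilde (k := k) (r := r) (t := t) (X := X) (c := c) (η := η) hp σ σ'
  have hcongr := sum_le_card_nsmul 𝒮 _ _ fun Sm hSm =>
    have ⟨hS, hm⟩ := mem_product.1 hSm
    solCount_congruentArrays_le_of_card hp hc hl (mem_powersetCard.1 hS).2 (hB Sm.2 hm)
  have htotal : Itilde k p r (r * t) X c η = solCount (pairFreq (powerSums k) (powerSums k))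
      (A ×ˢ W) (A ×ˢ W) := by
    simpa [mul_comm r] using
      Itilde_eq_solCount (k := k) (r := r) (X := X) (c := c) (η := η) hp (Fin t × Fin r)
  have hcover' := Nat.cast_le (α := ℝ).2 hcover
  simp only [Nat.cast_add, Nat.cast_sum, Nat.cast_mul, Nat.cast_two, ← htotal] at hcover'
  simp only [nsmul_eq_mul, card_univ, 𝒮, card_product, card_range, Nat.cast_mul] at hrows hcongr
  linarith

theorem exists_pos_mul_pow_le (ht : 2 ≤ t) (hp : 0 < p) {ρ : ℝ} (hρ : 0 < ρ) (hρ' : ρ ≤ 1) :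
    ∃ l > 0, p * l ^ (t + 1) ≤ ρ ∧ ∀ s : ℕ, t + 1 ≤ 2 * s →
      p * (1 / l) ^ (2 * s - (t + 1)) ≤
        (1 / ρ) ^ (2 * s - (t + 1)) * (p : ℝ) ^ (2 * (s : ℝ) / 3) := by
  have hp0 : (0 : ℝ) < p := mod_cast hp
  have hp1 : (1 : ℝ) ≤ p := mod_cast hp
  have hroot : ((p : ℝ) ^ ((t : ℝ) + 1)⁻¹) ^ (t + 1) = p := by
    rw [← Nat.cast_succ, Real.rpow_inv_natCast_pow hp0.le t.succ_ne_zero]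
  refine ⟨ρ / (p : ℝ) ^ ((t : ℝ) + 1)⁻¹, by positivity, ?_, fun s hs => ?_⟩
  · rw [div_pow, hroot, mul_div_cancel₀ _ hp0.ne']
    exact pow_le_of_le_one hρ.le hρ' t.succ_ne_zero
  · have hexp : 1 + ((t : ℝ) + 1)⁻¹ * ((2 * s - (t + 1) : ℕ) : ℝ) ≤ 2 * s / 3 := by
      have ht' : (3 : ℝ) ≤ t + 1 := mod_cast Nat.succ_le_succ ht
      rw [Nat.cast_sub hs]
      push_cast
      calc 1 + ((t : ℝ) + 1)⁻¹ * (2 * s - (t + 1)) = 2 * s / (t + 1) := by field_simp; ring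
        _ ≤ 2 * s / 3 := by gcongr
    calc p * (1 / (ρ / (p : ℝ) ^ ((t : ℝ) + 1)⁻¹)) ^ (2 * s - (t + 1))
        = (1 / ρ) ^ (2 * s - (t + 1)) *
            (p : ℝ) ^ (1 + ((t : ℝ) + 1)⁻¹ * ((2 * s - (t + 1) : ℕ) : ℝ)) := by
          rw [Real.rpow_one_add' hp0.le (by positivity), Real.rpow_mul hp0.le, Real.rpow_natCast,
            one_div_div, div_eq_mul_one_div, mul_pow]
          ring
      _ ≤ _ := by gcongr

theorem add_pow_mul_le_pow_succ (hp : 0 < p) {m : ℕ} (hm : m ∈ range p) (hη : η ≤ (p : ℤ) ^ c) :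
    η + (p : ℤ) ^ c * m ≤ (p : ℤ) ^ (c + 1) := by
  have hm' : (m : ℤ) + 1 ≤ p := mod_cast mem_range.1 hm
  calc η + (p : ℤ) ^ c * m ≤ (p : ℤ) ^ c * (m + 1) := by linarith
    _ ≤ (p : ℤ) ^ c * p := by gcongr
    _ = (p : ℤ) ^ (c + 1) := (pow_succ _ _).symm

theorem exists_scale {s : ℕ} (ht : 2 ≤ t) (hs : t + 1 ≤ 2 * s) (n : ℕ) :
    ∃ D : ℝ, 0 ≤ D ∧ ∀ {p : ℕ}, 0 < p → ∃ l > (0 : ℝ), n * (p * l ^ (t + 1)) ≤ 1 / 4 ∧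
      n * (p * (1 / l) ^ (2 * s - (t + 1))) ≤ D * (p : ℝ) ^ (2 * (s : ℝ) / 3) := by
  set ρ : ℝ := 1 / (4 * (n + 1)) with hρ
  have hρ0 : 0 < ρ := by positivity
  have hρ1 : ρ ≤ 1 := by
    rw [hρ, div_le_one (by positivity)]
    linarith [n.cast_nonneg (α := ℝ)]
  have hnρ : n * ρ ≤ 1 / 4 := by
    rw [hρ, mul_one_div, div_le_iff₀ (by positivity)]
    linarith
  refine ⟨n * (1 / ρ) ^ (2 * s - (t + 1)), by positivity, fun {p} hp => ?_⟩
  obtain ⟨l, hl, hlρ, hl'⟩ := exists_pos_mul_pow_le ht hp hρ0 hρ1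
  refine ⟨l, hl, (by gcongr : _ ≤ n * ρ).trans hnρ, ?_⟩
  rw [mul_assoc]
  exact mul_le_mul_of_nonneg_left (hl' s hs) n.cast_nonneg

theorem exists_Itilde_le (hr : 1 ≤ r) (ht : 2 ≤ t) : ∃ C : ℝ, 1 ≤ C ∧
    ∀ {k p : ℕ} {X : ℝ} {c : ℕ} {η : ℤ} {B : ℝ}, 0 < p → 1 ≤ c → 1 ≤ η → η ≤ (p : ℤ) ^ c →
      (∀ ξ : ℤ, 1 ≤ ξ → ξ ≤ (p : ℤ) ^ (c + 1) → Itilde k p r (r * t) X (c + 1) ξ ≤ B) →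
      Itilde k p r (r * t) X c η ≤
        C * (Ktilde k p r t X c η + (p : ℝ) ^ (2 * ((r * t : ℕ) : ℝ) / 3) * B) := by
  set F : ℝ := (Fintype.card (Equiv.Perm (Fin t × Fin r)) : ℝ) ^ 2
  have htr : t ≤ r * t := Nat.le_mul_of_pos_left t hr
  obtain ⟨D, hD, hscale⟩ := exists_scale (s := r * t) ht (by omega)
    #(powersetCard (t + 1) (univ : Finset (Fin t × Fin r)))
  have hF : 1 ≤ F := one_le_pow₀ (mod_cast Fintype.card_pos)
  refine ⟨2 * F + 4 * D, by linarith, fun {k p X c η B} hp hc hη hη' hB => ?_⟩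
  obtain ⟨l, hl, hl1, hl2⟩ := hscale hp
  have hB' (m) (hm : m ∈ range p) : Itilde k p r (r * t) X (c + 1) (η + p ^ c * m) ≤ B :=
    hB _ (le_add_of_le_of_nonneg hη (by positivity)) (add_pow_mul_le_pow_succ hp hm hη')
  have hB0 : 0 ≤ B := Itilde_nonneg.trans (hB' 0 (mem_range.2 hp))
  have hI : 0 ≤ Itilde k p r (r * t) X c η := Itilde_nonneg
  have hK : 0 ≤ Ktilde k p r t X c η := Ktilde_nonneg
  have hmain := Itilde_le_Ktilde_add hp hc hl hB'
  have h1 := mul_le_mul_of_nonneg_right hl1 hI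
  have h2 := mul_le_mul_of_nonneg_right hl2 hB0
  have h3 : 0 ≤ F * ((p : ℝ) ^ (2 * ((r * t : ℕ) : ℝ) / 3) * B) := by positivity
  have h4 := mul_nonneg hD hK
  linarith

theorem Ktilde_le_Kmax (hη : 1 ≤ η) (hη' : η ≤ (p : ℤ) ^ c) :
    Ktilde k p r t X c η ≤ Kmax k p r t X 0 c := by
  rw [Kmax, if_pos rfl]
  refine le_csSup (Set.Finite.bddAbove ?_) ⟨η, hη, hη', rfl⟩
  refine ((Set.finite_Icc (1 : ℤ) (p ^ c)).image (Ktilde k p r t X c)).subset ?_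
  rintro _ ⟨ξ, hξ, hξ', rfl⟩
  exact Set.mem_image_of_mem _ ⟨hξ, hξ'⟩

theorem Kmax_zero_nonneg (hp : 0 < p) : 0 ≤ Kmax k p r t X 0 c :=
  Ktilde_nonneg.trans (Ktilde_le_Kmax le_rfl (mod_cast Nat.one_le_pow c p hp))

theorem exists_Itilde_le_sum (hr : 1 ≤ r) (ht : 2 ≤ t) : ∃ C : ℝ, 1 ≤ C ∧
    ∀ {k p : ℕ} {X : ℝ} {B : ℝ}, 0 < p → ∀ n c : ℕ, 1 ≤ c →
      (∀ ξ : ℤ, 1 ≤ ξ → ξ ≤ (p : ℤ) ^ (c + n) → Itilde k p r (r * t) X (c + n) ξ ≤ B) →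
      ∀ η : ℤ, 1 ≤ η → η ≤ (p : ℤ) ^ c → Itilde k p r (r * t) X c η ≤
        C ^ n * (∑ h ∈ range n, ((p : ℝ) ^ (2 * ((r * t : ℕ) : ℝ) / 3)) ^ h *
          Kmax k p r t X 0 (c + h) + ((p : ℝ) ^ (2 * ((r * t : ℕ) : ℝ) / 3)) ^ n * B) := by
  obtain ⟨C, hC, hstep⟩ := exists_Itilde_le hr ht
  refine ⟨C, hC, fun {k p X B} hp n => ?_⟩
  set Q : ℝ := (p : ℝ) ^ (2 * ((r * t : ℕ) : ℝ) / 3)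
  set K : ℕ → ℝ := fun c => Kmax k p r t X 0 c
  have hK (c) : 0 ≤ K c := Kmax_zero_nonneg hp
  induction n with
  | zero => simp
  | succ n ih =>
    intro c hc hB η hη hη'
    have hIH := ih (c + 1) (by omega) (by rwa [add_right_comm, add_assoc])
    calc Itilde k p r (r * t) X c η
        ≤ C * (Ktilde k p r t X c η +
            Q * (C ^ n * (∑ h ∈ range n, Q ^ h * K (c + 1 + h) + Q ^ n * B))) :=
          hstep hp hc hη hη' hIH
      _ ≤ C * (C ^ n * K c +
            Q * (C ^ n * (∑ h ∈ range n, Q ^ h * K (c + 1 + h) + Q ^ n * B))) := by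
          gcongr
          exact (Ktilde_le_Kmax hη hη').trans (le_mul_of_one_le_left (hK c) (one_le_pow₀ hC))
      _ = C ^ (n + 1) * (∑ h ∈ range (n + 1), Q ^ h * K (c + h) + Q ^ (n + 1) * B) := by
          simp only [sum_range_succ', pow_succ', mul_assoc, ← mul_sum, pow_zero, one_mul,
            add_zero, add_assoc, add_comm 1]
          ring

end

end Conditioning

/-! ### Separated tuples -/

section SeparatedTuples

theorem solCount_le_card_mul_sum_fiber {k : ℕ} {τ υ : Type*} [DecidableEq υ]
    (Φ : τ → Fin k → ℤ) {A : Finset τ} {V : Finset υ} {f : τ → υ} (hf : Set.MapsTo f A V) :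
    solCount Φ A A ≤ #V * ∑ v ∈ V, solCount Φ {a ∈ A | f a = v} {a ∈ A | f a = v} := by
  rw [← Nat.cast_le (α := ℝ)]
  push_cast
  simp only [solCount_self_eq_integral]
  rw [← integral_finsetSum _ fun v _ => integrableOn_box (by fun_prop), ← integral_const_mul]
  refine integral_mono (integrableOn_box (by fun_prop)) (integrableOn_box (by fun_prop)) fun α => ?_
  dsimp only
  rw [expSum, ← sum_fiberwise_of_maps_to hf]
  exact (pow_le_pow_left₀ (norm_nonneg _) (norm_sum_le _ _) 2).trans sq_sum_le_card_mul_sum_sq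

theorem prod_le_sum_pow_card {ι : Type*} [Fintype ι] [Nonempty ι] {a : ι → ℝ} (ha : ∀ i, 0 ≤ a i) :
    ∏ i, a i ≤ ∑ i, a i ^ Fintype.card ι := by
  obtain ⟨j, hj⟩ := Finite.exists_max a
  calc ∏ i, a i ≤ ∏ _i : ι, a j := prod_le_prod (fun i _ => ha i) fun i _ => hj i
    _ = a j ^ Fintype.card ι := by rw [prod_const, card_univ]
    _ ≤ _ := single_le_sum (f := fun i => a i ^ Fintype.card ι) (fun i _ => pow_nonneg (ha i) _)
      (mem_univ j)

theorem solCount_product_piFinset_le {k : ℕ} {ι τ υ : Type*} [Fintype ι] [DecidableEq ι]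
    [Nonempty ι] (Φ : υ → Fin k → ℤ) (Ψ : τ → Fin k → ℤ) (A : Finset υ) (S : ι → Finset τ) :
    solCount (pairFreq Φ (tupleFreq Ψ)) (A ×ˢ Fintype.piFinset S) (A ×ˢ Fintype.piFinset S) ≤
      ∑ i, solCount (pairFreq Φ (tupleFreq Ψ)) (A ×ˢ tuples ι (S i)) (A ×ˢ tuples ι (S i)) := by
  rw [← Nat.cast_le (α := ℝ)]
  push_cast
  simp only [solCount_self_eq_integral]
  rw [← integral_finsetSum _ fun v _ => integrableOn_box (by fun_prop)]
  refine integral_mono (integrableOn_box (by fun_prop)) (integrableOn_box (by fun_prop)) fun α => ?_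
  simp only [expSum_product, expSum_piFinset, prod_const, card_univ, norm_mul, norm_pow,
    norm_prod, mul_pow, ← mul_sum, ← prod_pow, pow_right_comm _ (Fintype.card ι)]
  gcongr
  exact prod_le_sum_pow_card fun i => by positivity

variable {k p r : ℕ} {X : ℝ} {ι : Type*} [Fintype ι] [DecidableEq ι]

/-- The pairs of tuples with values in `[1, X]` such that, modulo `p`, the entries of the first
are distinct and avoid the entries of the second. -/
def separatedTuples (p r : ℕ) (ι : Type*) [Fintype ι] [DecidableEq ι] (X : ℝ) :
    Finset ((Fin r → ℤ) × (ι → ℤ)) :=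
  {xw ∈ tuples (Fin r) (intsUpTo X) ×ˢ tuples ι (intsUpTo X) |
    DistinctMod p xw.1 ∧ ∀ i j, ¬ xw.1 i ≡ xw.2 j [ZMOD p]}

theorem filter_separatedTuples_subset (hp : (0 : ℤ) < p) {v : ι → ℤ}
    (hv : v ∈ tuples ι (Icc 1 (p : ℤ))) :
    {xw ∈ separatedTuples p r ι X | (fun j => toIocMod hp 0 (xw.2 j)) = v} ⊆
      {x ∈ tuples (Fin r) (intsUpTo X) | DistinctMod p x ∧ ∀ j i, ¬ x i ≡ v j [ZMOD p]} ×ˢ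
        Fintype.piFinset fun j => residueClass X p (v j) := by
  intro xw hxw
  obtain ⟨hsep, hmod⟩ := mem_filter.1 hxw
  obtain ⟨hmem, hdistinct, hne⟩ := mem_filter.1 hsep
  obtain ⟨hx, hw⟩ := mem_product.1 hmem
  have hwv (j) : xw.2 j ≡ v j [ZMOD p] :=
    (toIocMod_zero_eq_iff hp (Fintype.mem_piFinset.1 hv j)).1 (congrFun hmod j)
  exact mem_product.2
    ⟨mem_filter.2 ⟨hx, hdistinct, fun j i hi => hne i j (hi.trans (hwv j).symm)⟩,
      Fintype.mem_piFinset.2 fun j => mem_residueClass.2 ⟨Fintype.mem_piFinset.1 hw j, hwv j⟩⟩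

theorem solCount_separatedTuples_le [Nonempty ι] (hp : 0 < p) {B : ℝ}
    (hB : ∀ η : ℤ, 1 ≤ η → η ≤ p → Itilde k p r (Fintype.card ι) X 1 η ≤ B) :
    (solCount (pairFreq (powerSums k) (powerSums k))
      (separatedTuples p r ι X) (separatedTuples p r ι X) : ℝ) ≤
    Fintype.card ι * (p : ℝ) ^ (2 * Fintype.card ι) * B := by
  have hp' : (0 : ℤ) < p := mod_cast hp
  set V := tuples ι (Icc 1 (p : ℤ)) with hV
  have hcard : (#V : ℝ) = (p : ℝ) ^ Fintype.card ι := by simp [hV, tuples]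
  have hfiber (v) (hv : v ∈ V) :
      (solCount (pairFreq (powerSums k) (powerSums k))
        {xw ∈ separatedTuples p r ι X | (fun j => toIocMod hp' 0 (xw.2 j)) = v}
        {xw ∈ separatedTuples p r ι X | (fun j => toIocMod hp' 0 (xw.2 j)) = v} : ℝ) ≤
      Fintype.card ι * B := by
    have hsub := filter_separatedTuples_subset (r := r) (X := X) hp' hv
    refine (Nat.cast_le.2 ((solCount_mono _ hsub hsub).trans
      (solCount_product_piFinset_le _ _ _ _))).trans ?_
    rw [Nat.cast_sum, ← nsmul_eq_mul, ← card_univ]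
    refine sum_le_card_nsmul _ _ _ fun j _ => ?_
    obtain ⟨hv1, hv2⟩ := mem_Icc.1 (Fintype.mem_piFinset.1 hv j)
    have hBj := hB (v j) hv1 hv2
    rw [Itilde_eq_solCount hp, pow_one] at hBj
    have havoid : {x ∈ tuples (Fin r) (intsUpTo X) |
        DistinctMod p x ∧ ∀ j i, ¬ x i ≡ v j [ZMOD p]} ⊆ avoidingTuples p r X (v j) :=
      monotone_filter_right _ fun x _ hx => ⟨hx.1, hx.2 j⟩
    have hprod := product_subset_product_left (t := tuples ι (residueClass X p (v j))) havoid
    exact (Nat.cast_le.2 (solCount_mono _ hprod hprod)).trans hBj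
  calc _ ≤ (#V : ℝ) * ∑ _v ∈ V, (Fintype.card ι * B) := by
        refine (Nat.cast_le.2 (solCount_le_card_mul_sum_fiber _
          (V := V) (f := fun xw j => toIocMod hp' 0 (xw.2 j)) fun xw _ =>
            Fintype.mem_piFinset.2 fun j => toIocMod_zero_mem_Icc hp' _)).trans ?_
        push_cast
        exact mul_le_mul_of_nonneg_left (sum_le_sum hfiber) (Nat.cast_nonneg _)
    _ = _ := by
        rw [sum_const, nsmul_eq_mul, hcard]
        ring

end SeparatedTuples

/-! ### Estimates for `J_{u,k}` -/

section MeanValues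

theorem sub_one_le_card_intsUpTo {X : ℝ} (hX : 0 ≤ X) : X - 1 ≤ #(intsUpTo X) := by
  have h : (#(intsUpTo X) : ℤ) = ⌊X⌋ := by
    rw [Int.card_Icc, add_sub_cancel_right, Int.toNat_of_nonneg (Int.floor_nonneg.2 hX)]
  calc X - 1 ≤ ⌊X⌋ := (Int.sub_one_lt_floor X).le
    _ = #(intsUpTo X) := mod_cast h.symm

theorem pow_le_Jcount (u k : ℕ) {X : ℝ} (hX : 2 ≤ X) : (X / 2) ^ u ≤ Jcount u k X := by
  have hdiag : #(tuples (Fin u) (intsUpTo X)) ≤ Jcount u k X := by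
    rw [Jcount_eq_solCount, solCount]
    exact card_le_card_of_injOn (fun x => (x, x)) (fun x hx =>
      mem_filter.2 ⟨mem_product.2 ⟨hx, hx⟩, rfl⟩) fun x _ y _ h => (Prod.mk.inj h).1
  have hcard : X / 2 ≤ #(intsUpTo X) := by
    linarith [sub_one_le_card_intsUpTo (X := X) (by linarith)]
  calc (X / 2) ^ u ≤ (#(intsUpTo X) : ℝ) ^ u := by gcongr
    _ = #(tuples (Fin u) (intsUpTo X)) := by simp [tuples]
    _ ≤ Jcount u k X := mod_cast hdiag

theorem tendsto_Jcount_atTop {u : ℕ} (hu : u ≠ 0) (k : ℕ) :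
    Tendsto (fun X : ℝ => (Jcount u k X : ℝ)) atTop atTop :=
  tendsto_atTop_mono' _ ((eventually_ge_atTop 2).mono fun _ => pow_le_Jcount u k)
    ((tendsto_pow_atTop hu).comp (tendsto_id.atTop_div_const two_pos))

theorem natCast_le_of_Jcount_lt_rpow {u k : ℕ} {Y₀ L : ℝ}
    (h : ∀ Y : ℝ, Y₀ ≤ Y → (Jcount u k Y : ℝ) < Y ^ L) : (u : ℝ) ≤ L := by
  by_contra! hlt
  obtain ⟨Y, hpow, hY₀, hY⟩ := (((tendsto_rpow_atTop (sub_pos.2 hlt)).eventually_ge_atTop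
    ((2 : ℝ) ^ u)).and ((eventually_ge_atTop Y₀).and (eventually_ge_atTop 2))).exists
  have hY0 : 0 < Y := by linarith
  have hlow := (pow_le_Jcount u k hY).trans_lt (h Y hY₀)
  rw [Real.rpow_sub hY0, Real.rpow_natCast, le_div_iff₀ (Real.rpow_pos_of_pos hY0 L)] at hpow
  rw [div_pow, div_lt_iff₀ (by positivity)] at hlow
  linarith

section

variable {k : ℕ} {ι : Type*} [Fintype ι] {x y : ι → ℤ}

theorem sum_pow_eq_of_powerSums_eq (h : powerSums k x = powerSums k y) {j : ℕ} (hj : j ≤ k) :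
    ∑ i, x i ^ j = ∑ i, y i ^ j := by
  rcases j.eq_zero_or_pos with rfl | hj0
  · simp
  · simpa [powerSums, tupleFreq, momentVec, Finset.sum_apply, Nat.sub_add_cancel hj0] using
      congrFun h ⟨j - 1, by omega⟩

theorem powerSums_add_eq (h : powerSums k x = powerSums k y) (e : ℤ) :
    powerSums k (fun i => x i + e) = powerSums k (fun i => y i + e) := by
  funext j
  simp only [powerSums, tupleFreq, momentVec, Finset.sum_apply, add_pow]
  rw [sum_comm, sum_comm (s := univ)]
  refine sum_congr rfl fun l hl => ?_
  have hl' : l ≤ k := by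
    have := mem_range.1 hl
    omega
  simp only [← sum_mul, sum_pow_eq_of_powerSums_eq h hl']

theorem powerSums_eq_of_mul {q : ℤ} (hq : q ≠ 0)
    (h : powerSums k (fun i => q * x i) = powerSums k (fun i => q * y i)) :
    powerSums k x = powerSums k y := by
  funext j
  have hj := congrFun h j
  simp only [powerSums, tupleFreq, momentVec, Finset.sum_apply, mul_pow, ← mul_sum] at hj ⊢
  exact mul_left_cancel₀ (pow_ne_zero _ hq) hj

end

variable {k : ℕ} {X Y : ℝ} {m η : ℤ}

theorem mul_ediv_add_one_of_mem_residueClass {z : ℤ} (hz : z ∈ residueClass X m η) :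
    m * ((z - η) / m + 1) = z + (m - η) := by
  rw [mul_add, Int.mul_ediv_cancel' (mem_residueClass.1 hz).2.symm.dvd]
  ring

theorem ediv_add_one_mem_intsUpTo (hη : 1 ≤ η) (hη' : η ≤ m) (hY : X / m + 1 ≤ Y) {z : ℤ}
    (hz : z ∈ residueClass X m η) : (z - η) / m + 1 ∈ intsUpTo Y := by
  have hm : 0 < m := by omega
  have hmR : (0 : ℝ) < m := mod_cast hm
  have hmul := mul_ediv_add_one_of_mem_residueClass hz
  obtain ⟨hz1, hzX⟩ := mem_Icc.1 (mem_residueClass.1 hz).1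
  refine mem_Icc.2 ⟨(pos_iff_pos_of_mul_pos (a := m) ?_).1 hm, Int.le_floor.2 (le_trans ?_ hY)⟩
  · rw [hmul]
    omega
  · have hmulR : ((m : ℝ) * ((z - η) / m + 1 : ℤ)) = z + (m - η) := mod_cast hmul
    have hηR : (1 : ℝ) ≤ η := mod_cast hη
    rw [div_add_one hmR.ne', le_div_iff₀' hmR, hmulR]
    linarith [Int.le_floor.1 hzX]

theorem setIntegral_residueClass_le_Jcount (hη : 1 ≤ η) (hη' : η ≤ m) (hY : X / m + 1 ≤ Y)
    (u : ℕ) :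
    ∫ α in box k, ‖expSum (momentVec k) (residueClass X m η) α‖ ^ (2 * u) ≤ Jcount u k Y := by
  have hm : m ≠ 0 := by omega
  have hint := solCount_tuples_eq_integral (Fin u) (momentVec k) (residueClass X m η)
  rw [Fintype.card_fin] at hint
  rw [← hint, Jcount_eq_solCount, Nat.cast_le]
  have hmul {x : Fin u → ℤ} (hx : x ∈ tuples (Fin u) (residueClass X m η)) (i : Fin u) :=
    mul_ediv_add_one_of_mem_residueClass (Fintype.mem_piFinset.1 hx i)
  refine solCount_le_solCount_of_injOn (f := fun x i => (x i - η) / m + 1) (fun x hx => ?_)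
    (fun x hx y hy hxy => funext fun i => ?_) fun x hx y hy hxy => ?_
  · exact Fintype.mem_piFinset.2 fun i =>
      ediv_add_one_mem_intsUpTo hη hη' hY (Fintype.mem_piFinset.1 hx i)
  · have hi := congrArg (m * ·) (congrFun hxy i)
    simp only [hmul hx, hmul hy] at hi
    exact add_right_cancel hi
  · refine powerSums_eq_of_mul hm ?_
    simp only [hmul hx, hmul hy]
    exact powerSums_add_eq hxy _

theorem Itilde_le_Jcount {p c : ℕ} (hp : 0 < p) (r s : ℕ) {l : ℝ} (hl : 0 < l) (hη : 1 ≤ η)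
    (hη' : η ≤ (p : ℤ) ^ c) (hY : X / (p : ℝ) ^ c + 1 ≤ Y) :
    Itilde k p r s X c η ≤
      l ^ (2 * s) * Jcount (r + s) k X + (1 / l) ^ (2 * r) * Jcount (r + s) k Y := by
  set g : (Fin k → ℝ) → ℝ := fun α => ‖expSum (momentVec k) (intsUpTo X) α‖
  set h : (Fin k → ℝ) → ℝ := fun α => ‖expSum (momentVec k) (residueClass X (p ^ c) η) α‖
  have hsub : avoidingTuples p r X η ×ˢ tuples (Fin s) (residueClass X (p ^ c) η) ⊆
      tuples (Fin r) (intsUpTo X) ×ˢ tuples (Fin s) (residueClass X (p ^ c) η) :=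
    product_subset_product_left (filter_subset _ _)
  have hI : Itilde k p r s X c η ≤ ∫ α in box k, h α ^ (2 * s) * g α ^ (2 * r) := by
    have hle := Nat.cast_le (α := ℝ).2
      (solCount_mono (pairFreq (powerSums k) (powerSums k)) hsub hsub)
    rw [← Itilde_eq_solCount (ι := Fin s) hp, Fintype.card_fin, solCount_self_eq_integral] at hle
    refine hle.trans_eq (integral_congr_ae (.of_forall fun α => ?_))
    simp only [expSum_product, expSum_tuples, Fintype.card_fin, norm_mul, norm_pow, g, h]
    ring
  have hclass : ∫ α in box k, h α ^ (2 * (r + s)) ≤ Jcount (r + s) k Y :=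
    setIntegral_residueClass_le_Jcount hη hη' (mod_cast hY) _
  calc Itilde k p r s X c η
      ≤ ∫ α in box k, (l ^ (2 * s) * g α ^ (2 * (r + s)) +
          (1 / l) ^ (2 * r) * h α ^ (2 * (r + s))) := by
        refine hI.trans (integral_mono (integrableOn_box (by fun_prop))
          (integrableOn_box (by fun_prop)) fun α => ?_)
        rw [mul_add 2, add_comm (2 * r)]
        exact pow_mul_pow_le (norm_nonneg _) (norm_nonneg _) hl _ _
    _ = l ^ (2 * s) * Jcount (r + s) k X +
          (1 / l) ^ (2 * r) * ∫ α in box k, h α ^ (2 * (r + s)) := by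
        rw [integral_add (integrableOn_box (by fun_prop)) (integrableOn_box (by fun_prop)),
          integral_const_mul, integral_const_mul, ← Jcount_eq_integral]
    _ ≤ _ := by gcongr

end MeanValues

/-! ### Choosing the prime -/

section ChoosingPrime

theorem exists_card_le_two_mul_card_filter {α β : Type*} {P : Finset α} (hP : P.Nonempty)
    (S : Finset β) (good : α → β → Prop) [∀ p s, Decidable (good p s)] {b : ℕ}
    (hb : ∀ s ∈ S, #{p ∈ P | ¬ good p s} ≤ b) (hbP : 2 * b ≤ #P) :
    ∃ p ∈ P, #S ≤ 2 * #{s ∈ S | good p s} := by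
  refine exists_le_of_sum_le hP ?_
  calc ∑ _p ∈ P, #S = ∑ _s ∈ S, #P := by simp [mul_comm]
    _ ≤ ∑ s ∈ S, 2 * #{p ∈ P | good p s} := sum_le_sum fun s hs => by
        have := card_filter_add_card_filter_not (s := P) fun p => good p s
        have := hb s hs
        omega
    _ = ∑ p ∈ P, 2 * #{s ∈ S | good p s} := by
        rw [← mul_sum, ← mul_sum]
        exact congrArg (2 * ·) (sum_card_bipartiteAbove_eq_sum_card_bipartiteBelow good).symm

variable {P : Finset ℕ} {M X : ℝ} {T : ℕ} {ι : Type*} [Fintype ι] [DecidableEq ι]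

theorem card_primes_dvd_le (hM : 1 < M) (hP : ∀ p ∈ P, p.Prime) (hMP : ∀ p ∈ P, M ≤ p) {d : ℕ}
    (hd : d ≠ 0) (hdM : (d : ℝ) ≤ M ^ T) : #{p ∈ P | p ∣ d} ≤ T := by
  have hdvd : ∏ p ∈ P with p ∣ d, p ∣ d :=
    prod_primes_dvd _ (fun p hp => (hP p (mem_filter.1 hp).1).prime) fun p hp => (mem_filter.1 hp).2
  refine (pow_le_pow_iff_right₀ hM).1 ?_
  calc M ^ #{p ∈ P | p ∣ d} ≤ ((∏ p ∈ P with p ∣ d, p : ℕ) : ℝ) := by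
        rw [Nat.cast_prod, ← prod_const]
        exact prod_le_prod (fun _ _ => by positivity) fun p hp => hMP p (mem_filter.1 hp).1
    _ ≤ d := mod_cast Nat.le_of_dvd (Nat.pos_of_ne_zero hd) hdvd
    _ ≤ M ^ T := hdM

theorem card_primes_not_distinctMod_le (hM : 1 < M) (hP : ∀ p ∈ P, p.Prime)
    (hMP : ∀ p ∈ P, M ≤ p) (hX : X ≤ M ^ T) {x : ι → ℤ} (hx : x ∈ injTuples ι (intsUpTo X)) :
    #{p ∈ P | ¬ DistinctMod p x} ≤ Fintype.card ι ^ 2 * T := by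
  obtain ⟨hmem, hinj⟩ := mem_injTuples.1 hx
  have hsub : {p ∈ P | ¬ DistinctMod p x} ⊆
      univ.offDiag.biUnion fun ij : ι × ι => {p ∈ P | p ∣ (x ij.2 - x ij.1).natAbs} := by
    intro p hp
    obtain ⟨hpP, hnd⟩ := mem_filter.1 hp
    rw [distinctMod_iff] at hnd
    push Not at hnd
    obtain ⟨i, j, hmod, hij⟩ := hnd
    exact mem_biUnion.2 ⟨(i, j), mem_offDiag.2 ⟨mem_univ _, mem_univ _, hij⟩,
      mem_filter.2 ⟨hpP, Int.natCast_dvd.1 hmod.dvd⟩⟩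
  have hcard : #(univ : Finset ι).offDiag ≤ Fintype.card ι ^ 2 := by
    rw [offDiag_card, card_univ, sq]
    exact Nat.sub_le _ _
  refine (card_le_card hsub).trans ((card_biUnion_le_card_mul _ _ T fun ij hij => ?_).trans
    (Nat.mul_le_mul_right T hcard))
  refine card_primes_dvd_le hM hP hMP
    (Int.natAbs_ne_zero.2 (sub_ne_zero.2 (hinj.ne (mem_offDiag.1 hij).2.2.symm))) (le_trans ?_ hX)
  have hbound (i) : (1 : ℝ) ≤ x i ∧ (x i : ℝ) ≤ X := by
    obtain ⟨h1, h2⟩ := mem_Icc.1 (Fintype.mem_piFinset.1 hmem i)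
    exact ⟨mod_cast h1, Int.le_floor.1 h2⟩
  rw [Nat.cast_natAbs]
  push_cast
  exact abs_le.2 ⟨by linarith [hbound ij.1, hbound ij.2], by linarith [hbound ij.1, hbound ij.2]⟩

theorem exists_prime_solCount_injTuples_le (k : ℕ) (hM : 1 < M) (hP : ∀ p ∈ P, p.Prime)
    (hMP : ∀ p ∈ P, M ≤ p) (hX : X ≤ M ^ T) (hne : P.Nonempty)
    (hcard : 4 * (Fintype.card ι ^ 2 * T) ≤ #P) :
    ∃ p ∈ P, solCount (powerSums k) (injTuples ι (intsUpTo X)) (injTuples ι (intsUpTo X)) ≤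
      2 * solCount (powerSums k) {x ∈ tuples ι (intsUpTo X) | DistinctMod p x}
        {x ∈ tuples ι (intsUpTo X) | DistinctMod p x} := by
  set S : Finset ((ι → ℤ) × (ι → ℤ)) :=
    {ab ∈ injTuples ι (intsUpTo X) ×ˢ injTuples ι (intsUpTo X) |
      powerSums k ab.1 = powerSums k ab.2} with hS
  have hbad : ∀ ab ∈ S, #{p ∈ P | ¬ (DistinctMod p ab.1 ∧ DistinctMod p ab.2)} ≤
      2 * (Fintype.card ι ^ 2 * T) := fun ab hab => by
    obtain ⟨ha, hb⟩ := mem_product.1 (mem_filter.1 hab).1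
    have hunion : {p ∈ P | ¬ (DistinctMod p ab.1 ∧ DistinctMod p ab.2)} ⊆
        {p ∈ P | ¬ DistinctMod p ab.1} ∪ {p ∈ P | ¬ DistinctMod p ab.2} := by
      simp only [not_and_or, filter_or, subset_refl]
    have := (card_le_card hunion).trans (card_union_le _ _)
    have := card_primes_not_distinctMod_le hM hP hMP hX ha
    have := card_primes_not_distinctMod_le hM hP hMP hX hb
    omega
  obtain ⟨p, hpP, hp⟩ := exists_card_le_two_mul_card_filter hne S
    (fun p ab => DistinctMod p ab.1 ∧ DistinctMod p ab.2) hbad (by omega)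
  refine ⟨p, hpP, hp.trans (Nat.mul_le_mul_left 2 (card_le_card fun ab hab => ?_))⟩
  simp only [hS, mem_injTuples, mem_filter, mem_product] at hab ⊢
  tauto

theorem solCount_distinctMod_le_solCount_separatedTuples (k p r : ℕ) (X : ℝ) :
    solCount (powerSums k) {x ∈ tuples (Fin r ⊕ ι) (intsUpTo X) | DistinctMod p x}
        {x ∈ tuples (Fin r ⊕ ι) (intsUpTo X) | DistinctMod p x} ≤
      solCount (pairFreq (powerSums k) (powerSums k)) (separatedTuples p r ι X)
        (separatedTuples p r ι X) := by
  refine solCount_le_solCount_of_injOn (f := Equiv.sumArrowEquivProdArrow (Fin r) ι ℤ)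
    (fun x hx => ?_) (Equiv.injective _).injOn fun x _ y _ hxy => ?_
  · obtain ⟨hmem, hdistinct⟩ := mem_filter.1 hx
    rw [Fintype.mem_piFinset] at hmem
    refine mem_filter.2 ⟨mem_product.2 ⟨Fintype.mem_piFinset.2 fun i => hmem _,
      Fintype.mem_piFinset.2 fun j => hmem _⟩, hdistinct.comp Sum.inl_injective, fun i j h => ?_⟩
    exact Sum.inl_ne_inr (distinctMod_iff.1 hdistinct _ _ h)
  · simpa only [pairFreq, powerSums, tupleFreq, Fintype.sum_sum_type,
      Equiv.sumArrowEquivProdArrow_apply_fst, Equiv.sumArrowEquivProdArrow_apply_snd] using hxy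

theorem eventually_exists_primes (n : ℕ) : ∀ᶠ M : ℝ in atTop, ∃ P : Finset ℕ, n ≤ #P ∧
    ∀ p ∈ P, p.Prime ∧ M < p ∧ (p : ℝ) ≤ 2 * M := by
  filter_upwards [(tendsto_card_primes_Ioc.comp tendsto_nat_floor_atTop).eventually_ge_atTop n,
    eventually_ge_atTop 0] with M hn hM
  refine ⟨_, hn, fun p hp => ?_⟩
  obtain ⟨hpM, hprime⟩ := mem_filter.1 hp
  obtain ⟨hlt, hle⟩ := mem_Ioc.1 hpM
  refine ⟨hprime, (Nat.floor_lt hM).1 hlt, ?_⟩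
  calc (p : ℝ) ≤ 2 * (⌊M⌋₊ : ℝ) := mod_cast hle
    _ ≤ 2 * M := by gcongr; exact Nat.floor_le hM

theorem le_rpow_pow_ceil_one_div {θ : ℝ} (hθ : 0 < θ) (hX : 1 ≤ X) : X ≤ (X ^ θ) ^ ⌈1 / θ⌉₊ := by
  rw [← Real.rpow_mul_natCast (by positivity)]
  refine Real.self_le_rpow_of_one_le hX ?_
  rw [← div_le_iff₀' hθ]
  exact Nat.le_ceil _

theorem eventually_exists_prime_Jcount_le (k : ℕ) {r : ℕ} (hr : r ≠ 0) (ι : Type*) [Fintype ι]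
    [DecidableEq ι] {θ : ℝ} (hθ : 0 < θ) :
    ∀ᶠ X : ℝ in atTop, ∃ p : ℕ, p.Prime ∧ X ^ θ < p ∧ (p : ℝ) ≤ 2 * X ^ θ ∧
      (Jcount (r + Fintype.card ι) k X : ℝ) ≤
        8 * solCount (pairFreq (powerSums k) (powerSums k)) (separatedTuples p r ι X)
          (separatedTuples p r ι X) := by
  obtain ⟨C, hC⟩ := exists_solCount_tuples_le_injTuples (τ := ℤ) (Fin r ⊕ ι)
  have hMlim := tendsto_rpow_atTop hθ
  filter_upwards [hMlim.eventually (eventually_exists_primes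
      (4 * (Fintype.card (Fin r ⊕ ι) ^ 2 * ⌈1 / θ⌉₊) + 1)), eventually_ge_atTop 1,
    hMlim.eventually_gt_atTop 1,
    (tendsto_Jcount_atTop (u := r + Fintype.card ι) (by omega) k).eventually_ge_atTop (2 * C)]
    with X ⟨P, hcard, hP⟩ hX hM hJ
  obtain ⟨p, hpP, hp⟩ := exists_prime_solCount_injTuples_le (ι := Fin r ⊕ ι) k hM
    (fun p hp => (hP p hp).1) (fun p hp => (hP p hp).2.1.le) (le_rpow_pow_ceil_one_div hθ hX)
    (card_pos.1 (by omega)) (by omega)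
  obtain ⟨hprime, hlt, hle⟩ := hP p hpP
  refine ⟨p, hprime, hlt, hle, ?_⟩
  have hinj := hC (momentVec k) (intsUpTo X)
  rw [solCount_tuples_intsUpTo, Fintype.card_sum, Fintype.card_fin] at hinj
  have hsep := hp.trans (Nat.mul_le_mul_left 2
    (solCount_distinctMod_le_solCount_separatedTuples k p r X))
  have hsep' : (solCount (powerSums k) (injTuples (Fin r ⊕ ι) (intsUpTo X))
      (injTuples (Fin r ⊕ ι) (intsUpTo X)) : ℝ) ≤
      2 * solCount (pairFreq (powerSums k) (powerSums k)) (separatedTuples p r ι X)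
        (separatedTuples p r ι X) := mod_cast hsep
  linarith

end ChoosingPrime

/-! ### The pre-congruencing step -/

section Precongruencing

theorem exists_mul_ge_of_le_sum {ι : Type*} {s : Finset ι} (hs : s.Nonempty) {a : ℝ} {f : ι → ℝ}
    (h : a ≤ ∑ i ∈ s, f i) : ∃ i ∈ s, a ≤ #s * f i := by
  refine exists_le_of_sum_le hs ?_
  rw [sum_const, nsmul_eq_mul, ← mul_sum]
  gcongr

theorem sq_rpow_mul_two_div_le {M p : ℝ} (hM : 0 < M) (hp : 0 ≤ p) (hpM : p ≤ 2 * M) :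
    (p ^ ((7 : ℝ) / 3)) ^ 2 * (2 / M ^ 5) ≤ 64 * M ^ (-((1 : ℝ) / 3)) := by
  have hpow : (p ^ ((7 : ℝ) / 3)) ^ 2 ≤ 32 * M ^ ((14 : ℝ) / 3) := by
    calc (p ^ ((7 : ℝ) / 3)) ^ 2 = p ^ ((14 : ℝ) / 3) := by
          rw [← Real.rpow_mul_natCast hp]
          norm_num
      _ ≤ (2 * M) ^ ((14 : ℝ) / 3) := by gcongr
      _ = 2 ^ ((14 : ℝ) / 3) * M ^ ((14 : ℝ) / 3) := Real.mul_rpow zero_le_two hM.le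
      _ ≤ 2 ^ (5 : ℝ) * M ^ ((14 : ℝ) / 3) := by gcongr <;> norm_num
      _ = 32 * M ^ ((14 : ℝ) / 3) := by norm_num
  have hexp : M ^ (-((1 : ℝ) / 3)) = M ^ ((14 : ℝ) / 3) / M ^ 5 := by
    rw [← Real.rpow_natCast M 5, ← Real.rpow_sub hM]
    norm_num
  calc (p ^ ((7 : ℝ) / 3)) ^ 2 * (2 / M ^ 5) ≤ 32 * M ^ ((14 : ℝ) / 3) * (2 / M ^ 5) := by gcongr
    _ = 64 * M ^ (-((1 : ℝ) / 3)) := by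
      rw [hexp]
      ring

theorem pow_mul_rpow_le {u : ℕ} (hu : u ≠ 0) {M p X L : ℝ} (hM : 2 ≤ M)
    (hM' : 64 * M ^ (-((1 : ℝ) / 3)) ≤ 1) (hp : 0 ≤ p) (hpM : p ≤ 2 * M) (hX : 0 ≤ X)
    (hL : (u : ℝ) ≤ L) :
    (p ^ ((7 : ℝ) / 3)) ^ (2 * u) * (2 * (X / M ^ 5)) ^ L ≤
      64 * M ^ (-((1 : ℝ) / 3)) * X ^ L := by
  have hM0 : 0 < M := by linarith
  have hM5 : 2 / M ^ 5 ≤ 1 :=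
    (div_le_one (by positivity)).2 (hM.trans (le_self_pow₀ (by linarith) (by norm_num)))
  calc (p ^ ((7 : ℝ) / 3)) ^ (2 * u) * (2 * (X / M ^ 5)) ^ L
      = (p ^ ((7 : ℝ) / 3)) ^ (2 * u) * (2 / M ^ 5) ^ L * X ^ L := by
        rw [mul_assoc, ← Real.mul_rpow (by positivity) hX, mul_div_assoc', div_mul_eq_mul_div]
    _ ≤ (p ^ ((7 : ℝ) / 3)) ^ (2 * u) * (2 / M ^ 5) ^ (u : ℝ) * X ^ L := by
        refine mul_le_mul_of_nonneg_right (mul_le_mul_of_nonneg_left ?_ ?_) ?_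
        · exact Real.rpow_le_rpow_of_exponent_ge (by positivity) hM5 hL
        all_goals positivity
    _ = ((p ^ ((7 : ℝ) / 3)) ^ 2 * (2 / M ^ 5)) ^ u * X ^ L := by
        rw [Real.rpow_natCast, pow_mul, mul_pow]
    _ ≤ (64 * M ^ (-((1 : ℝ) / 3))) ^ u * X ^ L := by
        refine mul_le_mul_of_nonneg_right (pow_le_pow_left₀ ?_ ?_ u) ?_
        · positivity
        · exact sq_rpow_mul_two_div_le hM0 hp hpM
        · positivity
    _ ≤ 64 * M ^ (-((1 : ℝ) / 3)) * X ^ L := by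
        gcongr
        exact pow_le_of_le_one (by positivity) hM' hu

theorem rpow_half_le_div_pow {X θ : ℝ} (hX : 1 ≤ X) (hθ : θ ≤ 1 / 10) :
    X ^ ((1 : ℝ) / 2) ≤ X / (X ^ θ) ^ 5 := by
  have hX0 : 0 < X := by linarith
  have h5 : (X ^ θ) ^ 5 ≤ X ^ ((1 : ℝ) / 2) := by
    rw [← Real.rpow_mul_natCast hX0.le]
    exact Real.rpow_le_rpow_of_exponent_le hX (by push_cast; linarith)
  calc X ^ ((1 : ℝ) / 2) = X / X ^ ((1 : ℝ) / 2) := by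
        rw [eq_div_iff (by positivity), ← Real.rpow_add hX0]
        norm_num
    _ ≤ X / (X ^ θ) ^ 5 := by gcongr

variable {k : ℕ} {θ : ℝ}

theorem pow_mul_Jcount_le {u : ℕ} (hu : u ≠ 0) (hθ : θ ≤ 1 / 10) {X L δ p : ℝ}
    (hX : 1 ≤ X) (hM : 2 ≤ X ^ θ) (hM' : 64 * (X ^ θ) ^ (-((1 : ℝ) / 3)) ≤ 1) (hδ : δ ≤ θ / 12)
    (hupper : ∀ Y, X ^ ((1 : ℝ) / 2) ≤ Y → (Jcount u k Y : ℝ) < Y ^ (L + δ))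
    (hlower : X ^ (L - δ) < (Jcount u k X : ℝ)) (hp : 0 ≤ p) (hpM : p ≤ 2 * X ^ θ) :
    (p ^ ((7 : ℝ) / 3)) ^ (2 * u) * Jcount u k (2 * (X / (X ^ θ) ^ 5)) ≤
      64 * (X ^ θ) ^ (-((1 : ℝ) / 6)) * Jcount u k X := by
  have hX0 : 0 < X := by linarith
  set M := X ^ θ
  have hM0 : 0 < M := by linarith
  have hY : X ^ ((1 : ℝ) / 2) ≤ 2 * (X / M ^ 5) :=
    (rpow_half_le_div_pow hX hθ).trans (le_mul_of_one_le_left (by positivity) one_le_two)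
  have hXL : X ^ (L + δ) ≤ M ^ ((1 : ℝ) / 6) * Jcount u k X := by
    calc X ^ (L + δ) = X ^ (2 * δ) * X ^ (L - δ) := by
          rw [← Real.rpow_add hX0]
          ring_nf
      _ ≤ X ^ (θ * (1 / 6)) * Jcount u k X := by
          exact mul_le_mul (Real.rpow_le_rpow_of_exponent_le hX (by linarith)) hlower.le
            (by positivity) (by positivity)
      _ = M ^ ((1 : ℝ) / 6) * Jcount u k X := by rw [Real.rpow_mul hX0.le]
  calc (p ^ ((7 : ℝ) / 3)) ^ (2 * u) * Jcount u k (2 * (X / M ^ 5))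
      ≤ (p ^ ((7 : ℝ) / 3)) ^ (2 * u) * (2 * (X / M ^ 5)) ^ (L + δ) := by
        gcongr
        exact (hupper _ hY).le
    _ ≤ 64 * M ^ (-((1 : ℝ) / 3)) * X ^ (L + δ) :=
        pow_mul_rpow_le hu hM hM' hp hpM hX0.le (natCast_le_of_Jcount_lt_rpow hupper)
    _ ≤ 64 * M ^ (-((1 : ℝ) / 3)) * (M ^ ((1 : ℝ) / 6) * Jcount u k X) := by gcongr
    _ = 64 * M ^ (-((1 : ℝ) / 6)) * Jcount u k X := by
        rw [mul_assoc, ← mul_assoc (M ^ _), ← Real.rpow_add hM0]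
        norm_num [mul_assoc]

theorem pow_mul_Itilde_le {p c : ℕ} (hp : 0 < p) (r s : ℕ) {X Y ε : ℝ} (hε : 0 < ε) {ξ : ℤ}
    (hξ : 1 ≤ ξ) (hξ' : ξ ≤ (p : ℤ) ^ c) (hY : X / (p : ℝ) ^ c + 1 ≤ Y) :
    (p : ℝ) ^ (2 * s) * ((p : ℝ) ^ (2 * (s : ℝ) / 3)) ^ 4 * Itilde k p r s X c ξ ≤
      ε ^ (2 * s) * Jcount (r + s) k X +
        (1 / ε) ^ (2 * r) * (((p : ℝ) ^ ((7 : ℝ) / 3)) ^ (2 * (r + s)) * Jcount (r + s) k Y) := by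
  have hp0 : (0 : ℝ) < p := mod_cast hp
  set q := (p : ℝ) ^ ((7 : ℝ) / 3)
  have hq : 0 < q := by positivity
  have hqpow : (p : ℝ) ^ (2 * s) * ((p : ℝ) ^ (2 * (s : ℝ) / 3)) ^ 4 = q ^ (2 * s) := by
    rw [← Real.rpow_natCast, ← Real.rpow_mul_natCast hp0.le, ← Real.rpow_mul_natCast hp0.le,
      ← Real.rpow_add hp0]
    push_cast
    ring_nf
  calc _ ≤ q ^ (2 * s) * ((ε / q) ^ (2 * s) * Jcount (r + s) k X +
        (1 / (ε / q)) ^ (2 * r) * Jcount (r + s) k Y) := by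
        rw [hqpow]
        gcongr
        exact Itilde_le_Jcount hp r s (by positivity) hξ hξ' hY
    _ = _ := by
        rw [one_div_div, div_pow, div_pow, one_div, inv_pow, mul_add 2, pow_add q]
        field_simp

theorem eventually_pow_mul_Itilde_le (k : ℕ) {r s : ℕ} (hs : s ≠ 0) (hθ : 0 < θ)
    (hθ' : θ ≤ 1 / 10) {κ : ℝ} (hκ : 0 < κ) :
    ∀ᶠ X : ℝ in atTop, ∀ L δ : ℝ, δ ≤ θ / 12 →
      (∀ Y, X ^ ((1 : ℝ) / 2) ≤ Y → (Jcount (r + s) k Y : ℝ) < Y ^ (L + δ)) →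
      X ^ (L - δ) < (Jcount (r + s) k X : ℝ) →
      ∀ p : ℕ, X ^ θ < p → (p : ℝ) ≤ 2 * X ^ θ → ∀ ξ : ℤ, 1 ≤ ξ → ξ ≤ (p : ℤ) ^ 5 →
        (p : ℝ) ^ (2 * s) * ((p : ℝ) ^ (2 * (s : ℝ) / 3)) ^ 4 * Itilde k p r s X 5 ξ ≤
          κ * Jcount (r + s) k X := by
  set ε := min 1 (κ / 2)
  have hε : 0 < ε := by positivity
  have hMlim := tendsto_rpow_atTop hθ
  have hsmall {a : ℝ} (ha : 0 < a) {b : ℝ} (hb : 0 < b) :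
      ∀ᶠ X : ℝ in atTop, (X ^ θ) ^ (-a) ≤ b :=
    ((tendsto_rpow_neg_atTop ha).comp hMlim).eventually_le_const hb
  filter_upwards [eventually_ge_atTop 1, hMlim.eventually_ge_atTop 2,
    hsmall (a := 1 / 3) (by norm_num) (b := 1 / 64) (by norm_num),
    hsmall (a := 1 / 6) (by norm_num) (b := κ / 2 / ((1 / ε) ^ (2 * r) * 64)) (by positivity)]
    with X hX hM hM3 hM6 L δ hδ hupper hlower p hpM hpM' ξ hξ hξ'
  rw [le_div_iff₀' (by positivity)] at hM6
  have hp : (0 : ℝ) < p := by linarith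
  have hY : X / (p : ℝ) ^ 5 + 1 ≤ 2 * (X / (X ^ θ) ^ 5) := by
    rw [two_mul]
    gcongr
    exact (Real.one_le_rpow hX (by norm_num)).trans (rpow_half_le_div_pow hX hθ')
  have hεs : ε ^ (2 * s) ≤ κ / 2 :=
    (pow_le_of_le_one hε.le (min_le_left _ _) (by omega)).trans (min_le_right _ _)
  calc _ ≤ ε ^ (2 * s) * Jcount (r + s) k X + (1 / ε) ^ (2 * r) *
        (((p : ℝ) ^ ((7 : ℝ) / 3)) ^ (2 * (r + s)) *
          Jcount (r + s) k (2 * (X / (X ^ θ) ^ 5))) :=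
        pow_mul_Itilde_le (mod_cast hp) r s hε hξ hξ' hY
    _ ≤ κ / 2 * Jcount (r + s) k X + (1 / ε) ^ (2 * r) *
        (64 * (X ^ θ) ^ (-((1 : ℝ) / 6)) * Jcount (r + s) k X) := by
        refine add_le_add (mul_le_mul_of_nonneg_right hεs (by positivity))
          (mul_le_mul_of_nonneg_left ?_ (by positivity))
        exact pow_mul_Jcount_le (by omega) hθ' hX hM (by linarith) hδ hupper hlower hp.le hpM'
    _ = κ / 2 * Jcount (r + s) k X +
        (1 / ε) ^ (2 * r) * 64 * (X ^ θ) ^ (-((1 : ℝ) / 6)) * Jcount (r + s) k X := by ring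
    _ ≤ κ / 2 * Jcount (r + s) k X + κ / 2 * Jcount (r + s) k X :=
        add_le_add le_rfl (mul_le_mul_of_nonneg_right hM6 (by positivity))
    _ = κ * Jcount (r + s) k X := by ring

theorem exists_solCount_separatedTuples_le_sum {r t : ℕ} (hr : 1 ≤ r) (ht : 2 ≤ t) (n : ℕ) :
    ∃ C > (0 : ℝ), ∀ {k p : ℕ} {X B : ℝ}, 0 < p →
      (∀ ξ : ℤ, 1 ≤ ξ → ξ ≤ (p : ℤ) ^ (1 + n) → Itilde k p r (r * t) X (1 + n) ξ ≤ B) →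
      (solCount (pairFreq (powerSums k) (powerSums k)) (separatedTuples p r (Fin (r * t)) X)
        (separatedTuples p r (Fin (r * t)) X) : ℝ) ≤
      C * (∑ h ∈ range n, (p : ℝ) ^ (2 * (r * t)) * ((p : ℝ) ^ (2 * ((r * t : ℕ) : ℝ) / 3)) ^ h *
          Kmax k p r t X 0 (1 + h) +
        (p : ℝ) ^ (2 * (r * t)) * ((p : ℝ) ^ (2 * ((r * t : ℕ) : ℝ) / 3)) ^ n * B) := by
  have hs : 0 < r * t := by positivity
  have : Nonempty (Fin (r * t)) := Fin.pos_iff_nonempty.1 hs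
  obtain ⟨C, hC, hsum⟩ := exists_Itilde_le_sum hr ht
  refine ⟨(r * t : ℕ) * C ^ n, by positivity, fun {k p X B} hp hB => ?_⟩
  have hsep := solCount_separatedTuples_le (k := k) (r := r) (X := X) (ι := Fin (r * t)) hp
    fun η hη hη' => by
      rw [Fintype.card_fin]
      exact hsum hp n 1 le_rfl hB η hη (by rwa [pow_one])
  rw [Fintype.card_fin] at hsep
  refine hsep.trans_eq ?_
  simp only [mul_assoc, ← mul_sum]
  ring

theorem pow_mul_rpow_pow_le (s : ℕ) {h : ℕ} {p M : ℝ} (hp : 0 ≤ p) (hM : 0 ≤ M)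
    (hpM : p ≤ 2 * M) (hh : h ≤ 3) : p ^ (2 * s) * (p ^ (2 * (s : ℝ) / 3)) ^ h ≤
      2 ^ (4 * s) * M ^ (2 * (s : ℝ) + 2 * (s : ℝ) * h / 3) := by
  have hh3 : (h : ℝ) ≤ 3 := mod_cast hh
  calc p ^ (2 * s) * (p ^ (2 * (s : ℝ) / 3)) ^ h = p ^ (2 * (s : ℝ) + 2 * (s : ℝ) * h / 3) := by
        rw [← Real.rpow_natCast, ← Real.rpow_mul_natCast hp,
          ← Real.rpow_add_of_nonneg hp (by positivity) (by positivity)]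
        push_cast
        ring_nf
    _ ≤ (2 * M) ^ (2 * (s : ℝ) + 2 * (s : ℝ) * h / 3) := by gcongr
    _ = 2 ^ (2 * (s : ℝ) + 2 * (s : ℝ) * h / 3) * M ^ (2 * (s : ℝ) + 2 * (s : ℝ) * h / 3) :=
        Real.mul_rpow zero_le_two hM
    _ ≤ 2 ^ ((4 * s : ℕ) : ℝ) * M ^ (2 * (s : ℝ) + 2 * (s : ℝ) * h / 3) := by
        gcongr
        · exact one_le_two
        · push_cast
          nlinarith [Nat.cast_nonneg (α := ℝ) s]
    _ = _ := by rw [Real.rpow_natCast]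

theorem lemma6_1_general (k : ℕ) {r t : ℕ} (hr : 1 ≤ r) (ht : 2 ≤ t) (hθ : 0 < θ)
    (hθ' : θ ≤ 1 / 10) :
    ∃ C : ℝ, 0 < C ∧ ∃ X₀ : ℝ, ∀ X : ℝ, X₀ ≤ X → ∀ L δ : ℝ, δ ≤ θ / 12 →
      (∀ Y : ℝ, X ^ ((1 : ℝ) / 2) ≤ Y → (Jcount (r * (t + 1)) k Y : ℝ) < Y ^ (L + δ)) →
      X ^ (L - δ) < (Jcount (r * (t + 1)) k X : ℝ) →
      ∃ p : ℕ, p.Prime ∧ X ^ θ < (p : ℝ) ∧ (p : ℝ) ≤ 2 * X ^ θ ∧ ∃ h : ℕ, h ≤ 3 ∧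
        (Jcount (r * (t + 1)) k X : ℝ) ≤
          C * (X ^ θ) ^ (2 * ((r * t : ℕ) : ℝ) + 2 * ((r * t : ℕ) : ℝ) * (h : ℝ) / 3) *
            Kmax k p r t X 0 (1 + h) := by
  rw [show r * (t + 1) = r + r * t by ring]
  obtain ⟨A, hA, hsep⟩ := exists_solCount_separatedTuples_le_sum hr ht 4
  obtain ⟨X₀, hX₀⟩ := eventually_atTop.1 ((eventually_exists_prime_Jcount_le k (r := r) (by omega)
    (Fin (r * t)) hθ).and ((eventually_pow_mul_Itilde_le k (r := r) (s := r * t) (by positivity)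
    hθ hθ' (κ := 1 / (16 * A)) (by positivity)).and (eventually_ge_atTop 0)))
  refine ⟨64 * A * 2 ^ (4 * (r * t)), by positivity, X₀,
    fun X hX L δ hδ hupper hlower => ?_⟩
  obtain ⟨⟨p, hprime, hpM, hpM', hJ⟩, htail, hX0⟩ := hX₀ X hX
  rw [Fintype.card_fin] at hJ
  have hp : (0 : ℝ) < p := mod_cast hprime.pos
  refine ⟨p, hprime, hpM, hpM', ?_⟩
  set J : ℝ := (Jcount (r + r * t) k X : ℝ)
  set W := fun h : ℕ => (p : ℝ) ^ (2 * (r * t)) * ((p : ℝ) ^ (2 * ((r * t : ℕ) : ℝ) / 3)) ^ h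
  have hW (h) : 0 < W h := by positivity
  have hsum := hsep (k := k) (X := X) (B := 1 / (16 * A) * J / W 4) hprime.pos fun ξ hξ hξ' =>
    (le_div_iff₀' (hW 4)).2 (htail L δ hδ hupper hlower p hpM hpM' ξ hξ hξ')
  rw [mul_div_cancel₀ _ (hW 4).ne', mul_add] at hsum
  have hJ' : J / (16 * A) ≤ ∑ h ∈ range 4, W h * Kmax k p r t X 0 (1 + h) := by
    rw [div_le_iff₀ (by positivity)]
    have hcancel : A * (1 / (16 * A) * J) = J / 16 := by
      field_simp
    linarith
  obtain ⟨h, hh, hle⟩ := exists_mul_ge_of_le_sum ⟨0, by simp⟩ hJ'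
  have hh3 : h ≤ 3 := Nat.lt_succ_iff.1 (mem_range.1 hh)
  refine ⟨h, hh3, ?_⟩
  rw [card_range, div_le_iff₀ (by positivity)] at hle
  calc J ≤ 64 * A * (W h * Kmax k p r t X 0 (1 + h)) := by push_cast at hle; linarith
    _ ≤ 64 * A * (2 ^ (4 * (r * t)) * (X ^ θ) ^ (2 * ((r * t : ℕ) : ℝ) +
          2 * ((r * t : ℕ) : ℝ) * h / 3) * Kmax k p r t X 0 (1 + h)) := by
        gcongr
        · exact Kmax_zero_nonneg hprime.pos
        · exact pow_mul_rpow_pow_le _ hp.le (by positivity) hpM' hh3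
    _ = _ := by ring

end Precongruencing

theorem thetaC_pos {t : ℕ} (ht : 0 < t) (N : ℕ) : 0 < thetaC t N := by
  rw [thetaC]
  positivity

theorem thetaC_le_one_tenth {t : ℕ} (ht : 0 < t) (N : ℕ) : thetaC t N ≤ 1 / 10 := by
  have ht' : (1 : ℝ) ≤ t := mod_cast ht
  calc (16 * (t : ℝ)) ^ (-((N : ℝ) + 1)) ≤ (16 * (t : ℝ)) ^ (-1 : ℝ) := by
        gcongr
        · linarith
        · linarith [Nat.cast_nonneg (α := ℝ) N]
    _ = 1 / (16 * (t : ℝ)) := by rw [Real.rpow_neg_one, one_div]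
    _ ≤ 1 / 10 := by gcongr; linarith

theorem deltaC_le_thetaC_div {t N : ℕ} (ht : 0 < t) (hN : 1 ≤ N) :
    deltaC t N ≤ thetaC t N / 12 := by
  have hN' : (1 : ℝ) ≤ N := mod_cast hN
  have htN : (1 : ℝ) ≤ (t : ℝ) ^ N := one_le_pow₀ (mod_cast ht)
  rw [deltaC]
  gcongr
  · exact (thetaC_pos ht N).le
  · nlinarith

/-- Lemma 6.1 (the pre-congruencing step): if J_{s+r}(X) > X^{λ-δ}, then there exist
a prime M < p ≤ 2M and h ∈ {0,1,2,3} with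
J_{s+r}(X) ≤ C M^{2s+2sh/3} K_{0,1+h}(X). -/
theorem lemma6_1 (k r t : ℕ) (hk : 2 ≤ k)
    (ht1 : max 2 (((k : ℝ) - 1) / 2) ≤ (t : ℝ)) (ht2 : t ≤ k)
    (hr1 : 1 ≤ r) (hr2 : r ≤ k) (hrt : k ≤ r + t) :
    ∃ N₀ : ℕ, ∀ N : ℕ, N₀ ≤ N →
    ∃ C : ℝ, 0 < C ∧ ∃ X₀ : ℝ, ∀ X : ℝ, X₀ ≤ X →
    (∀ Y : ℝ, X ^ ((1:ℝ)/2) ≤ Y →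
        (Jcount (r*(t+1)) k Y : ℝ) < Y ^ (lamExp k (r*(t+1)) + deltaC t N)) →
    X ^ (lamExp k (r*(t+1)) - deltaC t N) < (Jcount (r*(t+1)) k X : ℝ) →
    ∃ p : ℕ, p.Prime ∧ Mval t N X < (p:ℝ) ∧ (p:ℝ) ≤ 2 * Mval t N X ∧
    ∃ h : ℕ, h ≤ 3 ∧
      (Jcount (r*(t+1)) k X : ℝ) ≤
        C * Mval t N X ^ (2*((r*t : ℕ):ℝ) + 2*((r*t : ℕ):ℝ)*(h:ℝ)/3)
          * Kmax k p r t X 0 (1+h) := by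
  have ht : 2 ≤ t := mod_cast (le_max_left (2 : ℝ) _).trans ht1
  have ht0 : 0 < t := by omega
  refine ⟨1, fun N hN => ?_⟩
  obtain ⟨C, hC, X₀, hX₀⟩ := lemma6_1_general k hr1 ht (thetaC_pos ht0 N)
    (thetaC_le_one_tenth ht0 N)
  exact ⟨C, hC, X₀, fun X hX => hX₀ X hX _ _ (deltaC_le_thetaC_div ht0 hN)⟩

end
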